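/- Suppose F satisfies (G1) and the Perron–Frobenius operator P_σ of the base shift has spectral gap on d_θ-Lipschitz functions (together with the Lasota–Yorke inequality ‖P_σ^n φ‖_θ ≤ θ^n‖φ‖_θ + C₂‖φ‖_∞). Then the transfer operator F^* : S^∞ → S^∞ can be written F^* = P + N where: (a) P is a projection (P² = P) with one-dimensional image; (b) there exist ξ ∈ (0,1) and K > 0 such that ‖N^n(μ)‖_{S^∞} ≤ K ξ^n ‖μ‖_{S^∞} for every μ ∈ S^∞ and n ≥ 1; and (c) PN = NP = 0. -/

import Mathlib

open MeasureTheory ENNReal Set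

namespace RDS

/-- The one-sided subshift of finite type `Σ_A^+` determined by the 0-1 matrix `A`. -/
abbrev SigmaA (N : ℕ) (A : Fin N → Fin N → Bool) :=
  {x : ℕ → Fin N // ∀ i, A (x i) (x (i + 1)) = true}

variable {N : ℕ} {A : Fin N → Fin N → Bool}

/-- The shift map `σ` on `Σ_A^+`. -/
def shift (x : SigmaA N A) : SigmaA N A :=
  ⟨fun i => x.val (i + 1), fun i => x.prop (i + 1)⟩

/-- Aperiodicity of a 0-1 matrix: some power has all entries positive. -/
def Aperiodic (A : Fin N → Fin N → Bool) : Prop :=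
  ∃ k : ℕ, 0 < k ∧ ∀ i j,
    0 < ((Matrix.of fun a b => if A a b then (1 : ℕ) else 0) ^ k) i j

/-- The metric `d_θ(x,y) = Σ_i θ^i (1 - δ(x_i, y_i))` on `Σ_A^+`. -/
noncomputable def dTheta (θ : ℝ) (x y : SigmaA N A) : ℝ :=
  ∑' i : ℕ, θ ^ i * (if x.val i = y.val i then (0 : ℝ) else 1)

/-- Cylinder sets of `Σ_A^+`. -/
def cylinder (n : ℕ) (w : Fin (n + 1) → Fin N) : Set (SigmaA N A) :=
  {x | ∀ i : Fin (n + 1), x.val i = w i}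

/-- `m` is a Markov measure on `Σ_A^+` compatible with `A`: it is given on
cylinders by a stochastic matrix `P` (vanishing where `A` vanishes) and a
stationary probability vector `p`. -/
def IsMarkov (m : Measure (SigmaA N A)) : Prop :=
  ∃ (p : Fin N → ℝ≥0∞) (P : Fin N → Fin N → ℝ≥0∞),
    (∑ i, p i = 1) ∧ (∀ i, ∑ j, P i j = 1) ∧ (∀ j, ∑ i, p i * P i j = p j) ∧
    (∀ i j, A i j = false → P i j = 0) ∧
    ∀ (n : ℕ) (w : Fin (n + 1) → Fin N),
      m (cylinder n w) = p (w 0) * ∏ i : Fin n, P (w i.castSucc) (w i.succ)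

/-- `σ_i⁻¹(γ)`: the sequence `γ` with the symbol `i` prepended
(defined when `A i γ₀ = 1`), i.e. the inverse branch of the restriction `σ_i`
of `σ` to the cylinder `[i]`. -/
def prepend (i : Fin N) (x : SigmaA N A) (h : A i (x.val 0) = true) : SigmaA N A :=
  ⟨fun n => match n with
    | 0 => i
    | Nat.succ k => x.val k,
   fun j => match j with
    | 0 => h
    | Nat.succ k => x.prop k⟩

/-- `f` is `L`-Lipschitz with respect to the distance function `d`. -/
def LipWithD {X : Type*} (d : X → X → ℝ) (L : ℝ) (f : X → ℝ) : Prop :=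
  ∀ x y, |f x - f y| ≤ L * d x y

/-- `f` is Lipschitz with respect to the distance function `d`. -/
def LipD {X : Type*} (d : X → X → ℝ) (f : X → ℝ) : Prop :=
  ∃ L : ℝ, LipWithD d L f

/-- The best Lipschitz constant of `f` with respect to `d` (valued in `ℝ≥0∞`). -/
noncomputable def lipConst {X : Type*} (d : X → X → ℝ) (f : X → ℝ) : ℝ≥0∞ :=
  ⨆ (x : X) (y : X), ENNReal.ofReal (|f x - f y| / d x y)

/-- The sup norm of `f` (valued in `ℝ≥0∞`). -/
noncomputable def supNormE {X : Type*} (f : X → ℝ) : ℝ≥0∞ :=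
  ⨆ x : X, ENNReal.ofReal |f x|

/-- The norm `‖f‖_θ = ‖f‖_∞ + Lip_d(f)`. -/
noncomputable def thetaNorm {X : Type*} (d : X → X → ℝ) (f : X → ℝ) : ℝ≥0∞ :=
  supNormE f + lipConst d f

/-- The Perron-Frobenius operator duality characterizing `P_σ`:
`∫ P_σ(φ) · ψ dm = ∫ φ · (ψ ∘ σ) dm` for integrable `φ` and bounded measurable `ψ`. -/
def IsPerronFrobenius (m : Measure (SigmaA N A))
    (Pσ : (SigmaA N A → ℝ) → SigmaA N A → ℝ) : Prop :=
  ∀ φ ψ : SigmaA N A → ℝ, Integrable φ m → Measurable ψ → (∃ C, ∀ x, |ψ x| ≤ C) →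
    ∫ x, Pσ φ x * ψ x ∂m = ∫ x, φ x * ψ (shift x) ∂m

/-- Spectral gap for `P_σ` on `d_θ`-Lipschitz functions with constants `D`, `r`:
`‖P_σ^n φ‖_θ ≤ D r^n ‖φ‖_θ` for all `n` and all `d_θ`-Lipschitz `φ` with
`∫ φ dm = 0`. -/
def HasGap (m : Measure (SigmaA N A)) (θ : ℝ)
    (Pσ : (SigmaA N A → ℝ) → SigmaA N A → ℝ) (D r : ℝ) : Prop :=
  ∀ φ : SigmaA N A → ℝ, LipD (dTheta θ) φ → (∫ x, φ x ∂m) = 0 →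
    ∀ n : ℕ, thetaNorm (dTheta θ) (Pσ^[n] φ) ≤
      ENNReal.ofReal (D * r ^ n) * thetaNorm (dTheta θ) φ

/-- `Jm i` is the Jacobian `J_{m,σ_i}` of `m` with respect to the branch `σ_i`
(the restriction of `σ` to the cylinder `[i]`): `m (σ_i(E)) = ∫_E J_{m,σ_i} dm`
for every measurable `E` (intersected with `[i]`). -/
def IsJacobian (m : Measure (SigmaA N A)) (Jm : Fin N → SigmaA N A → ℝ) : Prop :=
  ∀ (i : Fin N) (E : Set (SigmaA N A)), MeasurableSet E →
    m {γ : SigmaA N A | ∃ h : A i (γ.val 0) = true, prepend i γ h ∈ E} =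
      ∫⁻ x in E ∩ {x : SigmaA N A | x.val 0 = i}, ENNReal.ofReal (Jm i x) ∂m

variable {K : Type*} [MetricSpace K] [MeasurableSpace K]

/-- The Wasserstein-Kantorovich like distance `W(ν₁,ν₂)`: the supremum of
`|∫ g dν₁ - ∫ g dν₂|` over `g : K → ℝ` with `Lip(g) ≤ 1` and `‖g‖_∞ ≤ 1`.
Applied with `ν₂ = 0` it gives the norm `‖ν₁‖_W`; applied to the two parts of a
decomposition of a signed measure it gives its `‖·‖_W` norm. -/
noncomputable def wDist (ν₁ ν₂ : Measure K) : ℝ≥0∞ :=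
  ⨆ g : {g : K → ℝ // LipschitzWith 1 g ∧ ∀ z, |g z| ≤ 1},
    ENNReal.ofReal |∫ z, g.val z ∂ν₁ - ∫ z, g.val z ∂ν₂|

/-- The skew product `F(x,z) = (σ(x), G(x,z))`. -/
def skew (G : SigmaA N A × K → K) (p : SigmaA N A × K) : SigmaA N A × K :=
  (shift p.1, G p)

/-- The transfer operator `F^* μ (E) = μ (F⁻¹ E)` acting on signed measures. -/
noncomputable def transfer (G : SigmaA N A × K → K)
    (μ : SignedMeasure (SigmaA N A × K)) : SignedMeasure (SigmaA N A × K) :=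
  μ.map (skew G)

/-- Condition (G1): uniform contraction of the vertical fibers with rate `α`. -/
def CondG1 (G : SigmaA N A × K → K) (α : ℝ) : Prop :=
  ∀ (x : SigmaA N A) (z₁ z₂ : K), dist (G (x, z₁)) (G (x, z₂)) ≤ α * dist z₁ z₂

/-- Condition (G2): `x ↦ G(x,z)` is `d_θ`-Lipschitz with constant `H`,
uniformly in `z`. -/
def CondG2 (θ : ℝ) (G : SigmaA N A × K → K) (H : ℝ) : Prop :=
  ∀ (z : K) (x y : SigmaA N A), dist (G (x, z)) (G (y, z)) ≤ H * dTheta θ x y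

/-- `T` is (the path `γ ↦ μ|_γ` of) a disintegration of `μ` along the vertical
fibers, over the reference measure `m`: `μ(E) = ∫ (μ|_γ)(E ∩ γ) dm(γ)`. -/
def IsDisint (m : Measure (SigmaA N A)) (μ : Measure (SigmaA N A × K))
    (T : SigmaA N A → Measure K) : Prop :=
  (∀ E : Set (SigmaA N A × K), MeasurableSet E →
      μ E = ∫⁻ γ, T γ {z | (γ, z) ∈ E} ∂m) ∧
  ∀ E : Set K, MeasurableSet E → Measurable fun γ => T γ E

/-- The (essential) `‖·‖_W`-Lipschitz constant of a path of measures,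
`|Γ|_θ^ω = ess sup_{γ₁ ≠ γ₂} ‖Γ(γ₁) - Γ(γ₂)‖_W / d_θ(γ₁,γ₂)`. -/
noncomputable def pathLip (m : Measure (SigmaA N A)) (θ : ℝ)
    (T : SigmaA N A → Measure K) : ℝ≥0∞ :=
  essSup (fun p : SigmaA N A × SigmaA N A =>
    wDist (T p.1) (T p.2) / ENNReal.ofReal (dTheta θ p.1 p.2)) (m.prod m)

/-- The Lipschitz constant `|μ|_θ` of a positive measure: the infimum over
disintegrations `ω` of `μ` of `|μ|_θ^ω`. -/
noncomputable def lipDisint (m : Measure (SigmaA N A)) (θ : ℝ)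
    (μ : Measure (SigmaA N A × K)) : ℝ≥0∞ :=
  ⨅ T : {T : SigmaA N A → Measure K // IsDisint m μ T}, pathLip m θ T.val

/-- The fiberwise transfer formula: the path representing `F^*μ` induced by the
path `T` representing `μ`, i.e.
`γ ↦ Σ_i 1_{σ([i])}(γ) (F_{iγ})_*(T(iγ)) / J_{m,σ_i}(iγ)`. -/
noncomputable def transferPath (G : SigmaA N A × K → K) (Jm : Fin N → SigmaA N A → ℝ)
    (T : SigmaA N A → Measure K) : SigmaA N A → Measure K :=
  fun γ => ∑ i : Fin N, if h : A i (γ.val 0) = true then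
      ENNReal.ofReal ((Jm i (prepend i γ h))⁻¹) •
        ((T (prepend i γ h)).map fun z => G (prepend i γ h, z))
    else 0

variable [BorelSpace K] [CompactSpace K] [Nonempty K]

/-- The fiberwise restriction `μ|_γ = π₂_* (φ₁(γ) μ_γ)` of a finite positive
measure `μ` on `Σ_A^+ × K`, where `({μ_γ}_γ, φ₁ m)` is the Rokhlin
disintegration of `μ` along the vertical fibers and `φ₁ = d(π₁_*μ)/dm`. -/
noncomputable def fiberR (m : Measure (SigmaA N A))
    (μ : Measure (SigmaA N A × K)) (γ : SigmaA N A) : Measure K := by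
  by_cases h : IsFiniteMeasure μ
  · haveI := h
    exact (μ.fst.rnDeriv m γ) • μ.condKernel γ
  · exact 0

/-- The norm `‖μ‖_∞ = ess sup_γ ‖μ|_γ‖_W` of a signed measure written as a
difference `μ = μ₁ - μ₂` of positive measures. -/
noncomputable def infNormPair (m : Measure (SigmaA N A))
    (μ₁ μ₂ : Measure (SigmaA N A × K)) : ℝ≥0∞ :=
  essSup (fun γ => wDist (fiberR m μ₁ γ) (fiberR m μ₂ γ)) m

/-- The marginal density `φ₁ = d(π₁_*μ)/dm` of the signed measure `μ = μ₁ - μ₂`. -/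
noncomputable def phiPair (m : Measure (SigmaA N A))
    (μ₁ μ₂ : Measure (SigmaA N A × K)) (γ : SigmaA N A) : ℝ :=
  (μ₁.fst.rnDeriv m γ).toReal - (μ₂.fst.rnDeriv m γ).toReal

/-- Membership in `AB`: both parts are finite with first marginal absolutely
continuous with respect to `m`. -/
def MemABPair (m : Measure (SigmaA N A)) (μ₁ μ₂ : Measure (SigmaA N A × K)) : Prop :=
  μ₁.fst ≪ m ∧ μ₂.fst ≪ m ∧ IsFiniteMeasure μ₁ ∧ IsFiniteMeasure μ₂

/-- Membership in `S^∞`: `μ ∈ AB`, `‖μ‖_∞ < ∞` and the marginal density `φ₁`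
has a `d_θ`-Lipschitz version. -/
def MemSPair (m : Measure (SigmaA N A)) (θ : ℝ)
    (μ₁ μ₂ : Measure (SigmaA N A × K)) : Prop :=
  MemABPair m μ₁ μ₂ ∧ infNormPair m μ₁ μ₂ < ⊤ ∧
    ∃ ψ : SigmaA N A → ℝ, ψ =ᵐ[m] phiPair m μ₁ μ₂ ∧ LipD (dTheta θ) ψ

/-- `‖φ₁‖_θ`, computed on the best version of the marginal density. -/
noncomputable def thetaNormMu (m : Measure (SigmaA N A)) (θ : ℝ)
    (μ₁ μ₂ : Measure (SigmaA N A × K)) : ℝ≥0∞ :=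
  ⨅ ψ : {ψ : SigmaA N A → ℝ // ψ =ᵐ[m] phiPair m μ₁ μ₂}, thetaNorm (dTheta θ) ψ.val

/-- The norm `‖μ‖_{S^∞} = ‖φ₁‖_θ + ‖μ‖_∞`. -/
noncomputable def sNormPair (m : Measure (SigmaA N A)) (θ : ℝ)
    (μ₁ μ₂ : Measure (SigmaA N A × K)) : ℝ≥0∞ :=
  thetaNormMu m θ μ₁ μ₂ + infNormPair m μ₁ μ₂

/-- Positive part of a signed measure. -/
noncomputable def jPos {X : Type*} [MeasurableSpace X] (μ : SignedMeasure X) : Measure X :=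
  μ.toJordanDecomposition.posPart

/-- Negative part of a signed measure. -/
noncomputable def jNeg {X : Type*} [MeasurableSpace X] (μ : SignedMeasure X) : Measure X :=
  μ.toJordanDecomposition.negPart

/-- Membership in `AB` for signed measures. -/
def MemAB (m : Measure (SigmaA N A)) (μ : SignedMeasure (SigmaA N A × K)) : Prop :=
  MemABPair m (jPos μ) (jNeg μ)

/-- Membership in `S^∞` for signed measures. -/
def MemS (m : Measure (SigmaA N A)) (θ : ℝ) (μ : SignedMeasure (SigmaA N A × K)) : Prop :=
  MemSPair m θ (jPos μ) (jNeg μ)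

/-- `‖μ‖_∞` for signed measures. -/
noncomputable def infNorm (m : Measure (SigmaA N A))
    (μ : SignedMeasure (SigmaA N A × K)) : ℝ≥0∞ :=
  infNormPair m (jPos μ) (jNeg μ)

/-- `‖μ‖_{S^∞}` for signed measures. -/
noncomputable def sNorm (m : Measure (SigmaA N A)) (θ : ℝ)
    (μ : SignedMeasure (SigmaA N A × K)) : ℝ≥0∞ :=
  sNormPair m θ (jPos μ) (jNeg μ)

/-- `‖φ₁‖_∞` of the marginal density of a signed measure. -/
noncomputable def phiSup (m : Measure (SigmaA N A))
    (μ : SignedMeasure (SigmaA N A × K)) : ℝ≥0∞ :=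
  essSup (fun γ => ENNReal.ofReal |phiPair m (jPos μ) (jNeg μ) γ|) m

/-!
The Lipschitz functions `u` with `|u| ≤ 1` form a separable set, so a bound `‖ν‖_∞ ≤ B` is the
same as the bound `|∫ h dν| ≤ B ∫ f dm` for all `h(x, z) = f(x) u_x(z)` with `u_x` in the unit ball
defining `‖·‖_W`. In this dual form no disintegration appears, and pushing forward by the skew
product `F` costs little: up to the term `h(F(x, z₀))`, which depends on `x` alone and is controlled
by the marginal of `ν`, the contraction of the fibers turns the envelope `f` into `α f ∘ σ`.

By a Krylov–Bogolyubov argument, `F` preserves a probability measure `M` with marginal `m`. Take for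
`P` the mass projection `μ ↦ μ(Σ × K) M`; it commutes with `F^*` and absorbs it, so that
`N^n = (F^*)^n (1 - P)`. The measure `(1 - P) μ` has mass zero, so its marginal density decays like
`r^n` by the gap of `P_σ`, and then `‖(F^*)^n (1 - P) μ‖_∞` decays at every rate `ξ > max(α, r)`.
-/

section SpectralDecomposition

variable {R : Type*} [Ring R] {T P : R}

theorem mul_pow_eq_of_mul_eq (hPT : P * T = P) (n : ℕ) : P * T ^ n = P := by
  induction n with
  | zero => simp
  | succ n ih => rw [pow_succ, ← mul_assoc, ih, hPT]

theorem sub_pow_succ_eq_pow_mul_one_sub (hP : IsIdempotentElem P) (hPT : P * T = P)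
    (hTP : T * P = P) (n : ℕ) : (T - P) ^ (n + 1) = T ^ (n + 1) * (1 - P) := by
  induction n with
  | zero => rw [zero_add, pow_one, pow_one, mul_sub, mul_one, hTP]
  | succ n ih =>
    have hkill : P * (T ^ (n + 1) * (1 - P)) = 0 := by
      rw [← mul_assoc, mul_pow_eq_of_mul_eq hPT, mul_sub, mul_one, hP.eq, sub_self]
    rw [pow_succ', ih, sub_mul, hkill, sub_zero, ← mul_assoc, ← pow_succ']

end SpectralDecomposition

section MassProjection

variable {Y : Type*} [MeasurableSpace Y]

/-- The rank-one operator `μ ↦ μ(Y) M` on signed measures, which is the spectral projection of a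
transfer operator fixing `M`. -/
noncomputable def massProj (M : Measure Y) [IsFiniteMeasure M] :
    Module.End ℝ (SignedMeasure Y) where
  toFun μ := μ univ • M.toSignedMeasure
  map_add' μ ν := by rw [add_apply, add_smul]
  map_smul' c μ := by rw [smul_apply, smul_assoc, RingHom.id_apply]

theorem massProj_apply (M : Measure Y) [IsFiniteMeasure M] (μ : SignedMeasure Y) :
    massProj M μ = μ univ • M.toSignedMeasure := rfl

variable {M : Measure Y} [IsProbabilityMeasure M]

theorem toSignedMeasure_univ : M.toSignedMeasure univ = 1 := by
  rw [Measure.toSignedMeasure_apply_measurable .univ, probReal_univ]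

theorem toSignedMeasure_ne_zero : M.toSignedMeasure ≠ 0 := fun h ↦ by
  simpa [h] using toSignedMeasure_univ (M := M)

theorem isIdempotentElem_massProj : IsIdempotentElem (massProj M) :=
  LinearMap.ext fun μ ↦ by
    simp [massProj_apply, Module.End.mul_apply]

theorem massProj_mul_mapₗ {T : Y → Y} (hT : Measurable T) :
    massProj M * VectorMeasure.mapₗ T = massProj M :=
  LinearMap.ext fun μ ↦ by
    simp [massProj_apply, VectorMeasure.map_apply μ hT .univ]

theorem toSignedMeasure_map {Z : Type*} [MeasurableSpace Z] (μ : Measure Y) [IsFiniteMeasure μ]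
    {f : Y → Z} (hf : Measurable f) :
    μ.toSignedMeasure.map f = (μ.map f).toSignedMeasure := by
  ext s hs
  rw [VectorMeasure.map_apply _ hf hs, Measure.toSignedMeasure_apply_measurable (hf hs),
    Measure.toSignedMeasure_apply_measurable hs, map_measureReal_apply hf hs]

theorem mapₗ_mul_massProj {T : Y → Y} (hT : MeasurePreserving T M M) :
    VectorMeasure.mapₗ T * massProj M = massProj M :=
  LinearMap.ext fun μ ↦ by
    simp [massProj_apply, toSignedMeasure_map M hT.measurable, hT.map_eq]

theorem massProj_mul_mapₗ_sub {T : Y → Y} (hT : Measurable T) :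
    massProj M * (VectorMeasure.mapₗ T - massProj M) = 0 := by
  rw [mul_sub (massProj M), massProj_mul_mapₗ hT, isIdempotentElem_massProj.eq, sub_self]

theorem mapₗ_sub_mul_massProj {T : Y → Y} (hT : MeasurePreserving T M M) :
    (VectorMeasure.mapₗ T - massProj M) * massProj M = 0 := by
  rw [sub_mul _ (massProj M), mapₗ_mul_massProj hT, isIdempotentElem_massProj.eq, sub_self]

theorem iterate_mapₗ_sub_massProj {T : Y → Y} (hT : MeasurePreserving T M M)
    (μ : SignedMeasure Y) {n : ℕ} (hn : n ≠ 0) :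
    (⇑(VectorMeasure.mapₗ T - massProj M : Module.End ℝ (SignedMeasure Y)))^[n] μ =
      (VectorMeasure.map · T)^[n] (μ - μ univ • M.toSignedMeasure) := by
  obtain ⟨n, rfl⟩ := Nat.exists_eq_succ_of_ne_zero hn
  have hpow := sub_pow_succ_eq_pow_mul_one_sub (R := Module.End ℝ (SignedMeasure Y))
    isIdempotentElem_massProj (massProj_mul_mapₗ hT.measurable) (mapₗ_mul_massProj hT) n
  have hpowμ := LinearMap.congr_fun hpow μ
  rwa [Module.End.mul_apply, Module.End.coe_pow, Module.End.coe_pow] at hpowμ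

end MassProjection

section SignedIntegral

variable {Y : Type*} [MeasurableSpace Y]

instance isFiniteMeasure_variation (ν : SignedMeasure Y) : IsFiniteMeasure ν.variation := by
  rw [← SignedMeasure.totalVariation_eq_variation, SignedMeasure.totalVariation]
  infer_instance

instance isFiniteMeasure_jPos (ν : SignedMeasure Y) :
    IsFiniteMeasure (jPos ν) := ν.toJordanDecomposition.posPart_finite

instance isFiniteMeasure_jNeg (ν : SignedMeasure Y) :
    IsFiniteMeasure (jNeg ν) := ν.toJordanDecomposition.negPart_finite

theorem integrable_of_measurable_of_abs_le {μ : Measure Y} [IsFiniteMeasure μ] {h : Y → ℝ} {C : ℝ}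
    (hm : Measurable h) (hC : ∀ y, |h y| ≤ C) : Integrable h μ :=
  .of_bound hm.aestronglyMeasurable C (ae_of_all _ hC)

theorem integral_eq_integral_jPos_sub_integral_jNeg {ν : SignedMeasure Y} {h : Y → ℝ}
    (hpos : Integrable h (jPos ν)) (hneg : Integrable h (jNeg ν)) :
    ∫ᵛ y, h y ∂<•ν = ∫ y, h y ∂(jPos ν) - ∫ y, h y ∂(jNeg ν) := by
  conv_lhs => rw [← ν.toSignedMeasure_toJordanDecomposition, JordanDecomposition.toSignedMeasure]
  rw [VectorMeasure.integral_sub_vectorMeasure, VectorMeasure.integral_toSignedMeasure,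
    VectorMeasure.integral_toSignedMeasure]
  · rfl
  · rwa [VectorMeasure.Integrable, Measure.variation_toSignedMeasure]
  · rwa [VectorMeasure.Integrable, Measure.variation_toSignedMeasure]

theorem abs_integral_le_integral_variation (ν : SignedMeasure Y) (h : Y → ℝ) :
    |∫ᵛ y, h y ∂<•ν| ≤ ∫ y, |h y| ∂ν.variation := by
  simpa using VectorMeasure.norm_integral_le_integral_norm (μ := ν) (f := h)
    (B := (ContinuousLinearMap.lsmul ℝ ℝ).flip)

theorem abs_integral_le_of_variation_le {ν : SignedMeasure Y} {m : Measure Y} {C : ℝ}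
    (hC : 0 ≤ C) (hν : ν.variation ≤ ENNReal.ofReal C • m) {h : Y → ℝ} (hh : Integrable h m) :
    |∫ᵛ y, h y ∂<•ν| ≤ C * ∫ y, |h y| ∂m := by
  calc |∫ᵛ y, h y ∂<•ν| ≤ ∫ y, |h y| ∂ν.variation := abs_integral_le_integral_variation ν h
    _ ≤ ∫ y, |h y| ∂(ENNReal.ofReal C • m) :=
      integral_mono_measure hν (ae_of_all _ fun _ ↦ abs_nonneg _)
        (hh.abs.smul_measure ofReal_ne_top)
    _ = C * ∫ y, |h y| ∂m := by
      rw [integral_smul_measure, toReal_ofReal hC, smul_eq_mul]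

theorem integral_map_of_abs_le {Z : Type*} [MeasurableSpace Z] (ν : SignedMeasure Y) {T : Y → Z}
    (hT : Measurable T) {h : Z → ℝ} (hm : Measurable h) {C : ℝ} (hC : ∀ z, |h z| ≤ C) :
    ∫ᵛ z, h z ∂<•(ν.map T) = ∫ᵛ y, h (T y) ∂<•ν :=
  VectorMeasure.integral_map hT hm.aestronglyMeasurable
    (integrable_of_measurable_of_abs_le (hm.comp hT) fun y ↦ hC (T y))

theorem abs_integral_comp_fst_le {X : Type*} [MeasurableSpace X] {m : Measure X}
    [IsFiniteMeasure m] {ν : SignedMeasure (X × Y)} {B C : ℝ} {g : X → ℝ} (hB : 0 ≤ B)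
    (hν : (ν.map Prod.fst).variation ≤ ENNReal.ofReal B • m) (hg : Measurable g)
    (hC : ∀ x, |g x| ≤ C) : |∫ᵛ p, g p.1 ∂<•ν| ≤ B * ∫ x, |g x| ∂m := by
  rw [← integral_map_of_abs_le ν measurable_fst hg hC]
  exact abs_integral_le_of_variation_le hB hν (integrable_of_measurable_of_abs_le hg hC)

end SignedIntegral

section FiberBound

variable {X Y : Type*} [MeasurableSpace X] [PseudoMetricSpace Y] [MeasurableSpace Y]

/-- `h` is measurable and each slice `h (x, ·)` is bounded by `f x` and `f x`-Lipschitz: the test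
functions `h (x, z) = f x * u x z`, with `u x` in the unit ball defining `‖·‖_W`, written without
dividing by `f x`. -/
structure IsFiberTest (f : X → ℝ) (h : X × Y → ℝ) : Prop where
  measurable : Measurable h
  abs_le : ∀ x z, |h (x, z)| ≤ f x
  abs_sub_le : ∀ x z z', |h (x, z) - h (x, z')| ≤ f x * dist z z'

/-- The dual form of the bound `‖ν‖_∞ ≤ B` for the essential supremum over `x` of the `‖·‖_W`-norms
of the restrictions of `ν` to the fibers `{x} × Y`, with respect to the base measure `m`. -/
def FiberBound (m : Measure X) (ν : SignedMeasure (X × Y)) (B : ℝ) : Prop :=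
  ∀ ⦃f : X → ℝ⦄ ⦃h : X × Y → ℝ⦄ ⦃C : ℝ⦄, Measurable f → (∀ x, f x ≤ C) → IsFiberTest f h →
    |∫ᵛ p, h p ∂<•ν| ≤ B * ∫ x, f x ∂m

/-- `T` is a measurable skew product over `σ` which contracts the fibers by the factor `α`. -/
structure IsFiberContraction (σ : X → X) (α : ℝ) (T : X × Y → X × Y) : Prop where
  measurable : Measurable T
  fst_eq : ∀ p, (T p).1 = σ p.1
  dist_snd_le : ∀ x z z', dist (T (x, z)).2 (T (x, z')).2 ≤ α * dist z z'

theorem IsFiberContraction.continuous_snd {σ : X → X} {α : ℝ} {T : X × Y → X × Y}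
    (hT : IsFiberContraction σ α T) (hα : 0 ≤ α) (x : X) : Continuous fun z ↦ (T (x, z)).2 :=
  (LipschitzWith.of_dist_le_mul (K := ⟨α, hα⟩) (hT.dist_snd_le x)).continuous

variable {m : Measure X} {f : X → ℝ} {h : X × Y → ℝ} {C : ℝ}

namespace IsFiberTest

theorem nonneg [Nonempty Y] (hh : IsFiberTest f h) (x : X) : 0 ≤ f x :=
  (abs_nonneg _).trans (hh.abs_le x (Classical.arbitrary Y))

theorem abs_le_of_le (hh : IsFiberTest f h) (hC : ∀ x, f x ≤ C) (p : X × Y) : |h p| ≤ C :=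
  (hh.abs_le p.1 p.2).trans (hC p.1)

theorem integrable [Nonempty Y] [IsFiniteMeasure m] (hh : IsFiberTest f h) (hf : Measurable f)
    (hC : ∀ x, f x ≤ C) : Integrable f m :=
  integrable_of_measurable_of_abs_le hf fun x ↦ (abs_of_nonneg (hh.nonneg x)).trans_le (hC x)

theorem integrable_vectorMeasure (hh : IsFiberTest f h) (hC : ∀ x, f x ≤ C)
    (ν : SignedMeasure (X × Y)) : ν.Integrable h :=
  integrable_of_measurable_of_abs_le hh.measurable (hh.abs_le_of_le hC)

theorem indicator_mul [OpensMeasurableSpace Y] {E : Set X} (hE : MeasurableSet E) {u : Y → ℝ}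
    (hu : LipschitzWith 1 u) (hu1 : ∀ z, |u z| ≤ 1) :
    IsFiberTest (E.indicator 1) fun p ↦ E.indicator 1 p.1 * u p.2 := by
  have hnonneg x : 0 ≤ E.indicator (1 : X → ℝ) x := indicator_nonneg (by simp) x
  refine ⟨?_, fun x z ↦ ?_, fun x z z' ↦ ?_⟩
  · exact ((measurable_one.indicator hE).comp measurable_fst).mul
      (hu.continuous.measurable.comp measurable_snd)
  · rw [abs_mul, abs_of_nonneg (hnonneg x)]
    exact mul_le_of_le_one_right (hnonneg x) (hu1 z)
  · rw [← mul_sub, abs_mul, abs_of_nonneg (hnonneg x)]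
    gcongr
    · exact hnonneg x
    · simpa [Real.dist_eq] using hu.dist_le_mul z z'

variable {σ : X → X} {α : ℝ} {T : X × Y → X × Y}

theorem comp_sub_comp (hh : IsFiberTest f h) (hT : IsFiberContraction σ α T) (hα : 0 ≤ α)
    (hdist : ∀ z z' : Y, dist z z' ≤ 1) (z₀ : Y) :
    IsFiberTest (fun x ↦ α * f (σ x)) fun p ↦ h (T p) - h (T (p.1, z₀)) := by
  have : Nonempty Y := ⟨z₀⟩
  have hcontr x z z' : |h (T (x, z)) - h (T (x, z'))| ≤ α * f (σ x) * dist z z' := by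
    have hsplit z : T (x, z) = (σ x, (T (x, z)).2) := Prod.ext (hT.fst_eq _) rfl
    rw [hsplit z, hsplit z']
    calc _ ≤ f (σ x) * dist (T (x, z)).2 (T (x, z')).2 := hh.abs_sub_le _ _ _
      _ ≤ f (σ x) * (α * dist z z') := by gcongr; exacts [hh.nonneg _, hT.dist_snd_le x z z']
      _ = α * f (σ x) * dist z z' := by ring
  refine ⟨?_, fun x z ↦ ?_, fun x z z' ↦ by simpa using hcontr x z z'⟩
  · exact (hh.measurable.comp hT.measurable).sub
      (hh.measurable.comp (hT.measurable.comp (measurable_fst.prodMk measurable_const)))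
  · exact (hcontr x z z₀).trans
      (mul_le_of_le_one_right (mul_nonneg hα (hh.nonneg _)) (hdist z z₀))

end IsFiberTest

theorem fiberBound_toSignedMeasure [Nonempty Y] {M : Measure (X × Y)} [IsFiniteMeasure M] :
    FiberBound M.fst M.toSignedMeasure 1 := by
  intro f h C hf hC hh
  calc |∫ᵛ p, h p ∂<•M.toSignedMeasure| = |∫ p, h p ∂M| := by
        rw [VectorMeasure.integral_toSignedMeasure]
    _ ≤ ∫ p, |h p| ∂M := abs_integral_le_integral_abs
    _ ≤ ∫ p, f p.1 ∂M :=
      integral_mono_of_nonneg (ae_of_all _ fun p ↦ abs_nonneg (h p))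
        ((hh.integrable hf hC).comp_measurable measurable_fst)
        (ae_of_all _ fun p ↦ hh.abs_le p.1 p.2)
    _ = 1 * ∫ x, f x ∂M.fst := by
      rw [one_mul, Measure.fst, integral_map measurable_fst.aemeasurable hf.aestronglyMeasurable]

namespace FiberBound

theorem mono [Nonempty Y] {ν : SignedMeasure (X × Y)} {B B' : ℝ} (hν : FiberBound m ν B)
    (hB : B ≤ B') : FiberBound m ν B' := fun _ _ _ hf hC hh ↦
  (hν hf hC hh).trans (mul_le_mul_of_nonneg_right hB (integral_nonneg hh.nonneg))

theorem sub_smul {ν ν' : SignedMeasure (X × Y)} {B B' : ℝ} (hν : FiberBound m ν B)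
    (hν' : FiberBound m ν' B') (c : ℝ) : FiberBound m (ν - c • ν') (B + |c| * B') := by
  intro f h C hf hC hh
  rw [VectorMeasure.integral_sub_vectorMeasure (hh.integrable_vectorMeasure hC _)
      (hh.integrable_vectorMeasure hC _),
    VectorMeasure.integral_smul_vectorMeasure, smul_eq_mul]
  calc _ ≤ |∫ᵛ p, h p ∂<•ν| + |c| * |∫ᵛ p, h p ∂<•ν'| := (abs_sub _ _).trans_eq (by rw [abs_mul])
    _ ≤ B * ∫ x, f x ∂m + |c| * (B' * ∫ x, f x ∂m) := by gcongr; exacts [hν hf hC hh, hν' hf hC hh]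
    _ = (B + |c| * B') * ∫ x, f x ∂m := by ring

variable [Nonempty Y] [IsFiniteMeasure m] {σ : X → X} {α : ℝ} {T : X × Y → X × Y}
  {ν : SignedMeasure (X × Y)} {B : ℝ}

-- Subtracting the value on a reference section turns `h ∘ T` into a test function with the smaller
-- envelope `α * f ∘ σ`; the value on the section only sees the marginal of `ν`.
protected theorem map (hν : FiberBound m ν B) (hT : IsFiberContraction σ α T) (hα : 0 ≤ α)
    (hdist : ∀ z z' : Y, dist z z' ≤ 1) (hσ : MeasurePreserving σ m m) (hC : 0 ≤ C)
    (hmarg : (ν.map Prod.fst).variation ≤ ENNReal.ofReal C • m) :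
    FiberBound m (ν.map T) (α * B + C) := by
  intro f h C' hf hC' hh
  obtain ⟨z₀⟩ := ‹Nonempty Y›
  have hfσ : ∫ x, f (σ x) ∂m = ∫ x, f x ∂m := by
    rw [← integral_map hσ.measurable.aemeasurable hf.aestronglyMeasurable, hσ.map_eq]
  have hfσ_int : Integrable (fun x ↦ f (σ x)) m :=
    hσ.integrable_comp_of_integrable (hh.integrable hf hC')
  let g : X → ℝ := fun x ↦ h (T (x, z₀))
  have hg : Measurable g := hh.measurable.comp (hT.measurable.comp measurable_prodMk_right)
  have hgf x : |g x| ≤ f (σ x) := by rw [← hT.fst_eq (x, z₀)]; exact hh.abs_le _ _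
  have hg_int : |∫ᵛ p, g p.1 ∂<•ν| ≤ C * ∫ x, f x ∂m := by
    refine (abs_integral_comp_fst_le hC hmarg hg fun x ↦ (hgf x).trans (hC' _)).trans ?_
    rw [← hfσ]
    exact mul_le_mul_of_nonneg_left (integral_mono_of_nonneg (ae_of_all _ fun _ ↦ abs_nonneg _)
      hfσ_int (ae_of_all _ hgf)) hC
  have htest := hh.comp_sub_comp hT hα hdist z₀
  have hαC x : α * f (σ x) ≤ α * C' := mul_le_mul_of_nonneg_left (hC' _) hα
  have hdiff_int : |∫ᵛ p, (h (T p) - g p.1) ∂<•ν| ≤ B * (α * ∫ x, f x ∂m) := by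
    rw [← hfσ, ← integral_const_mul]
    exact hν ((hf.comp hσ.measurable).const_mul α) hαC htest
  have hg_integrable : ν.Integrable fun p ↦ g p.1 :=
    integrable_of_measurable_of_abs_le (hg.comp measurable_fst) fun p ↦ (hgf p.1).trans (hC' _)
  have hsplit : ∫ᵛ p, h p ∂<•(ν.map T) = ∫ᵛ p, (h (T p) - g p.1) ∂<•ν + ∫ᵛ p, g p.1 ∂<•ν := by
    rw [integral_map_of_abs_le ν hT.measurable hh.measurable (hh.abs_le_of_le hC'),
      ← VectorMeasure.integral_fun_add (htest.integrable_vectorMeasure hαC ν) hg_integrable]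
    simp only [g, sub_add_cancel]
  calc _ ≤ |∫ᵛ p, (h (T p) - g p.1) ∂<•ν| + |∫ᵛ p, g p.1 ∂<•ν| := hsplit ▸ abs_add_le _ _
    _ ≤ B * (α * ∫ x, f x ∂m) + C * ∫ x, f x ∂m := add_le_add hdiff_int hg_int
    _ = (α * B + C) * ∫ x, f x ∂m := by ring

theorem iterate_map {c r ξ : ℝ} (hB : 0 ≤ B) (hν : FiberBound m ν B) (hT : IsFiberContraction σ α T)
    (hα : 0 ≤ α) (hdist : ∀ z z' : Y, dist z z' ≤ 1) (hσ : MeasurePreserving σ m m) (hc : 0 ≤ c)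
    (hr : 0 ≤ r) (hrξ : r ≤ ξ) (hαξ : α < ξ)
    (hmarg : ∀ n, (((VectorMeasure.map · T)^[n] ν).map Prod.fst).variation ≤
      ENNReal.ofReal (c * r ^ n) • m) (n : ℕ) :
    FiberBound m ((VectorMeasure.map · T)^[n] ν) ((B + c / (ξ - α)) * ξ ^ n) := by
  have hξα : 0 < ξ - α := sub_pos.2 hαξ
  induction n with
  | zero => exact hν.mono (by rw [pow_zero, mul_one]; exact le_add_of_nonneg_right (by positivity))
  | succ n ih =>
    rw [Function.iterate_succ_apply']
    refine (ih.map hT hα hdist hσ (by positivity) (hmarg n)).mono ?_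
    have hk : c = c / (ξ - α) * (ξ - α) := (div_mul_cancel₀ c hξα.ne').symm
    calc α * ((B + c / (ξ - α)) * ξ ^ n) + c * r ^ n
        ≤ α * ((B + c / (ξ - α)) * ξ ^ n) + c / (ξ - α) * (ξ - α) * ξ ^ n := by
          rw [← hk]; gcongr
      _ = (α * B + c / (ξ - α) * ξ) * ξ ^ n := by ring
      _ ≤ (ξ * B + c / (ξ - α) * ξ) * ξ ^ n := by
          have := hr.trans hrξ
          gcongr
      _ = (B + c / (ξ - α)) * ξ ^ (n + 1) := by ring

end FiberBound

end FiberBound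

section KrylovBogolyubov

open Filter Topology TopologicalSpace

theorem integral_birkhoffAverage_map {Y : Type*} [MeasurableSpace Y] {T : Y → Y} {μ : Measure Y}
    {h : Y → ℝ} (hh : ∀ k, Integrable h ((Measure.map T)^[k] μ)) (n : ℕ) :
    ∫ y, h y ∂birkhoffAverage NNReal (Measure.map T) id n μ =
      birkhoffAverage ℝ (Measure.map T) (fun ρ ↦ ∫ y, h y ∂ρ) n μ := by
  simp only [birkhoffAverage, birkhoffSum, id_eq]
  rw [integral_smul_nnreal_measure, integral_finsetSum_measure fun k _ ↦ hh k, NNReal.smul_def,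
    NNReal.coe_inv, NNReal.coe_natCast]

theorem birkhoffAverage_of_forall_iterate_eq {X R M : Type*} [DivisionSemiring R] [CharZero R]
    [AddCommMonoid M] [Module R M] {f : X → X} {g : X → M} {x : X} {c : M}
    (h : ∀ k, g (f^[k] x) = c) {n : ℕ} (hn : n ≠ 0) : birkhoffAverage R f g n x = c := by
  simp [birkhoffAverage, birkhoffSum, h, ← Nat.cast_smul_eq_nsmul R, smul_smul, hn]

theorem isProbabilityMeasure_of_fst_eq {X Y : Type*} [MeasurableSpace X] [MeasurableSpace Y]
    {m : Measure X} [IsProbabilityMeasure m] {M : Measure (X × Y)} (hM : M.fst = m) :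
    IsProbabilityMeasure M :=
  ⟨by rw [← Measure.fst_univ, hM, measure_univ]⟩

theorem fst_map_eq_of_fst_eq {X Y : Type*} [MeasurableSpace X] [MeasurableSpace Y] {m : Measure X}
    {σ : X → X} {T : X × Y → X × Y} (hσ : MeasurePreserving σ m m) (hT : Measurable T)
    (hTσ : ∀ p, (T p).1 = σ p.1) {M : Measure (X × Y)} (hM : M.fst = m) : (M.map T).fst = m := by
  have hcomm : Prod.fst ∘ T = σ ∘ Prod.fst := funext hTσ
  rw [Measure.fst, Measure.map_map measurable_fst hT, hcomm,
    ← Measure.map_map hσ.measurable measurable_fst, ← Measure.fst, hM, hσ.map_eq]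

theorem fst_birkhoffAverage_map_eq {X Y : Type*} [MeasurableSpace X] [MeasurableSpace Y]
    {m : Measure X} {T : X × Y → X × Y} {M : Measure (X × Y)}
    (hM : ∀ k, ((Measure.map T)^[k] M).fst = m) {n : ℕ} (hn : n ≠ 0) :
    (birkhoffAverage NNReal (Measure.map T) id n M).fst = m := by
  rw [Measure.fst, ← Measure.mapₗ_apply_of_measurable measurable_fst,
    map_birkhoffAverage NNReal NNReal]
  refine birkhoffAverage_of_forall_iterate_eq (fun k ↦ ?_) hn
  rw [Function.comp_apply, id, Measure.mapₗ_apply_of_measurable measurable_fst]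
  exact hM k

variable {X Y : Type*} [MeasurableSpace X] [TopologicalSpace Y] [CompactSpace Y]
  [MetrizableSpace Y]

theorem measurable_continuousMap_of_measurable_eval [MeasurableSpace C(Y, ℝ)] [BorelSpace C(Y, ℝ)]
    {u : X → C(Y, ℝ)} (hu : ∀ y, Measurable fun x ↦ u x y) : Measurable u := by
  rcases isEmpty_or_nonempty Y with hY | hY
  · exact measurable_of_subsingleton_codomain u
  let ev : C(Y, ℝ) → ℕ → ℝ := fun v n ↦ v (denseSeq Y n)
  have hev : Continuous ev := continuous_pi fun n ↦ ContinuousEvalConst.continuous_eval_const _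
  have hinj : Function.Injective ev := fun v w hvw ↦ DFunLike.ext' <|
    (denseRange_denseSeq Y).equalizer v.continuous w.continuous hvw
  exact (hev.measurableEmbedding hinj).measurable_comp_iff.1 <| measurable_pi_lambda _ fun n ↦ hu _

variable [MeasurableSpace Y] [BorelSpace Y] [TopologicalSpace X] [MetrizableSpace X] [BorelSpace X]
  {m : Measure X} {g : X × Y → ℝ} {C : ℝ}
  {ι : Type*} {l : Filter ι} {Ms : ι → ProbabilityMeasure (X × Y)}
  {M : ProbabilityMeasure (X × Y)}

theorem fst_eq_of_tendsto [l.NeBot] (hMs : ∀ i, (Ms i : Measure (X × Y)).fst = m)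
    (hM : Tendsto Ms l (𝓝 M)) : (M : Measure (X × Y)).fst = m := by
  obtain ⟨i⟩ := l.nonempty_of_neBot
  have hlim := ((ProbabilityMeasure.continuous_map continuous_fst).tendsto M).comp hM
  have hconst j : (Ms i).map measurable_fst.aemeasurable =
      (Ms j).map measurable_fst.aemeasurable := Subtype.ext ((hMs i).trans (hMs j).symm)
  have hM_eq := tendsto_nhds_unique hlim (tendsto_const_nhds.congr hconst)
  exact (congrArg Subtype.val hM_eq).trans (hMs i)

variable [CompactSpace X]

-- `x ↦ g (x, ·)` is Bochner integrable in `C(Y, ℝ)`; approximating it in `L¹(m)` by a continuous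
-- map gives an error that only sees the marginal of `M`, hence a single `f` for all `M` over `m`.
theorem exists_continuousMap_forall_abs_integral_sub_le [IsFiniteMeasure m] (hg : Measurable g)
    (hgc : ∀ x, Continuous fun y ↦ g (x, y)) (hC : ∀ p, |g p| ≤ C) {ε : ℝ} (hε : 0 < ε) :
    ∃ f : C(X × Y, ℝ), ∀ (M : Measure (X × Y)) [IsFiniteMeasure M], M.fst = m →
      |∫ p, g p ∂M - ∫ p, f p ∂M| ≤ ε := by
  borelize C(Y, ℝ)
  let u : X → C(Y, ℝ) := fun x ↦ ⟨fun y ↦ g (x, y), hgc x⟩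
  have hu : Measurable u := measurable_continuousMap_of_measurable_eval fun y ↦
    hg.comp measurable_prodMk_right
  have hu_int : Integrable u m := by
    refine .of_bound hu.aestronglyMeasurable |C| (ae_of_all _ fun x ↦ ?_)
    exact (ContinuousMap.norm_le _ (abs_nonneg C)).2 fun y ↦ (hC (x, y)).trans (le_abs_self C)
  obtain ⟨v, hv, hv_int⟩ := hu_int.exists_boundedContinuous_integral_sub_le hε
  let f : C(X × Y, ℝ) := v.toContinuousMap.uncurry
  refine ⟨f, fun M _ hM ↦ ?_⟩
  have hg_int : Integrable g M := integrable_of_measurable_of_abs_le hg hC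
  have hf_int : Integrable f M := f.continuous.integrable_of_hasCompactSupport (.of_compactSpace f)
  have hdiff_int : Integrable (fun x ↦ ‖u x - v x‖) M.fst := hM ▸ (hu_int.sub hv_int).norm
  calc |∫ p, g p ∂M - ∫ p, f p ∂M| = |∫ p, (g p - f p) ∂M| := by rw [integral_sub hg_int hf_int]
    _ ≤ ∫ p, |g p - f p| ∂M := abs_integral_le_integral_abs
    _ ≤ ∫ p, ‖u p.1 - v p.1‖ ∂M :=
      integral_mono (hg_int.sub hf_int).abs (hdiff_int.comp_measurable measurable_fst)
        fun p ↦ (u p.1 - v p.1).norm_coe_le_norm p.2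
    _ = ∫ x, ‖u x - v x‖ ∂M.fst :=
      (integral_map measurable_fst.aemeasurable hdiff_int.aestronglyMeasurable).symm
    _ ≤ ε := hM ▸ hv

theorem tendsto_integral_of_fst_eq [IsFiniteMeasure m]
    (hMs : ∀ i, (Ms i : Measure (X × Y)).fst = m) (hM : Tendsto Ms l (𝓝 M))
    (hMfst : (M : Measure (X × Y)).fst = m) (hg : Measurable g)
    (hgc : ∀ x, Continuous fun y ↦ g (x, y)) (hC : ∀ p, |g p| ≤ C) :
    Tendsto (fun i ↦ ∫ p, g p ∂Ms i) l (𝓝 (∫ p, g p ∂M)) := by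
  refine Metric.tendsto_nhds.2 fun ε hε ↦ ?_
  obtain ⟨f, hf⟩ := exists_continuousMap_forall_abs_integral_sub_le (m := m) hg hgc hC
    (ε := ε / 4) (by positivity)
  have hlim := ProbabilityMeasure.tendsto_iff_forall_integral_tendsto.1 hM (.mkOfCompact f)
  filter_upwards [Metric.tendsto_nhds.1 hlim (ε / 4) (by positivity)] with i hi
  have hMi := abs_le.1 (hf (Ms i) (hMs i))
  have hMl := abs_le.1 (hf M hMfst)
  rw [Real.dist_eq, abs_lt] at hi ⊢
  simp only [BoundedContinuousFunction.mkOfCompact_apply] at hi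
  constructor <;> linarith

theorem tendsto_integral_comp_sub_integral_birkhoffAverage_map {Y : Type*} [MeasurableSpace Y]
    {T : Y → Y} (hT : Measurable T) {μ : Measure Y}
    [hμ : ∀ k, IsProbabilityMeasure ((Measure.map T)^[k] μ)] {h : Y → ℝ} (hh : Measurable h) {C : ℝ}
    (hC : ∀ y, |h y| ≤ C) :
    Tendsto (fun n ↦ ∫ y, h (T y) ∂birkhoffAverage NNReal (Measure.map T) id n μ -
      ∫ y, h y ∂birkhoffAverage NNReal (Measure.map T) id n μ) atTop (𝓝 0) := by
  have hbdd : Bornology.IsBounded (range fun k ↦ ∫ y, h y ∂(Measure.map T)^[k] μ) := by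
    refine isBounded_iff_forall_norm_le.2 ⟨C, forall_mem_range.2 fun k ↦ ?_⟩
    simpa using norm_integral_le_of_norm_le_const (μ := (Measure.map T)^[k] μ)
      (f := h) (ae_of_all _ hC)
  have hshift (ρ : Measure Y) : ∫ y, h (T y) ∂ρ = ∫ y, h y ∂ρ.map T :=
    (integral_map hT.aemeasurable hh.aestronglyMeasurable).symm
  refine (tendsto_birkhoffAverage_apply_sub_birkhoffAverage ℝ (f := Measure.map T)
    (g := fun ρ ↦ ∫ y, h y ∂ρ) hbdd).congr fun n ↦ ?_
  rw [integral_birkhoffAverage_map fun k ↦ integrable_of_measurable_of_abs_le hh hC,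
    integral_birkhoffAverage_map (h := fun y ↦ h (T y)) fun k ↦
      integrable_of_measurable_of_abs_le (hh.comp hT) fun y ↦ hC (T y)]
  simp only [birkhoffAverage, birkhoffSum, hshift, ← Function.iterate_succ_apply,
    Function.iterate_succ_apply']

variable {σ : X → X} {T : X × Y → X × Y}

-- Cesàro averages of `μ` under `T` accumulate weakly; since all of them have marginal `m`, weak
-- convergence extends to integrands continuous on fibers only, such as `f ∘ T`.
theorem exists_isProbabilityMeasure_measurePreserving [IsProbabilityMeasure m] [Nonempty Y]
    (hσ : MeasurePreserving σ m m) (hT : Measurable T) (hTσ : ∀ p, (T p).1 = σ p.1)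
    (hTc : ∀ x, Continuous fun y ↦ (T (x, y)).2) :
    ∃ M : Measure (X × Y), IsProbabilityMeasure M ∧ M.fst = m ∧ MeasurePreserving T M M := by
  obtain ⟨y₀⟩ := ‹Nonempty Y›
  let μ : Measure (X × Y) := m.prod (Measure.dirac y₀)
  have hμ k : ((Measure.map T)^[k] μ).fst = m := by
    induction k with
    | zero => exact Measure.fst_prod
    | succ k ih =>
      rw [Function.iterate_succ_apply']
      exact fst_map_eq_of_fst_eq hσ hT hTσ ih
  have hprob k : IsProbabilityMeasure ((Measure.map T)^[k] μ) :=
    isProbabilityMeasure_of_fst_eq (hμ k)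
  have hfst n := fst_birkhoffAverage_map_eq hμ (Nat.succ_ne_zero n)
  let Ms n : ProbabilityMeasure (X × Y) := ⟨_, isProbabilityMeasure_of_fst_eq (hfst n)⟩
  obtain ⟨M, -, hM⟩ := isCompact_univ.ultrafilter_le_nhds ((hyperfilter ℕ).map Ms) (by simp)
  replace hM : Tendsto Ms (hyperfilter ℕ) (𝓝 M) := hM
  have hMfst := fst_eq_of_tendsto hfst hM
  refine ⟨M, inferInstance, hMfst, hT, ?_⟩
  refine ext_of_forall_integral_eq_of_IsFiniteMeasure fun f ↦ ?_
  rw [integral_map hT.aemeasurable f.continuous.measurable.aestronglyMeasurable]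
  have hfT_cont x : Continuous fun y ↦ f (T (x, y)) := by
    have hT_eq y : T (x, y) = (σ x, (T (x, y)).2) := Prod.ext (hTσ (x, y)) rfl
    exact (f.continuous.comp (continuous_const.prodMk (hTc x))).congr
      fun y ↦ congrArg f (hT_eq y).symm
  have hlim := tendsto_integral_of_fst_eq hfst hM hMfst (f.continuous.measurable.comp hT)
    hfT_cont fun p ↦ f.norm_coe_le_norm (T p)
  have hlim' := ProbabilityMeasure.tendsto_iff_forall_integral_tendsto.1 hM f
  have hdiff := ((tendsto_integral_comp_sub_integral_birkhoffAverage_map hT (μ := μ)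
    f.continuous.measurable f.norm_coe_le_norm).comp (tendsto_add_atTop_nat 1)).mono_left
      Nat.hyperfilter_le_atTop
  exact sub_eq_zero.1 (tendsto_nhds_unique (hlim.sub hlim') hdiff)

end KrylovBogolyubov

section AbsolutelyContinuousMarginal

variable {Z : Type*} [MeasurableSpace Z] {m : Measure (SigmaA N A)}

theorem memAB_iff_variation_fst_absolutelyContinuous {ν : SignedMeasure (SigmaA N A × Z)} :
    MemAB m ν ↔ ν.variation.fst ≪ m := by
  have hfst : ν.variation.fst = (jPos ν).fst + (jNeg ν).fst := by
    rw [← SignedMeasure.totalVariation_eq_variation]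
    exact Measure.map_add _ _ measurable_fst
  rw [hfst, Measure.AbsolutelyContinuous.add_left_iff]
  exact ⟨fun h ↦ ⟨h.1, h.2.1⟩, fun h ↦ ⟨h.1, h.2, ν.toJordanDecomposition.posPart_finite,
    ν.toJordanDecomposition.negPart_finite⟩⟩

namespace MemAB

variable {ν ν' : SignedMeasure (SigmaA N A × Z)}

theorem sub (hν : MemAB m ν) (hν' : MemAB m ν') : MemAB m (ν - ν') := by
  rw [memAB_iff_variation_fst_absolutelyContinuous] at *
  refine ((Measure.absolutelyContinuous_of_le VectorMeasure.variation_sub_le).map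
    measurable_fst).trans ?_
  rw [Measure.map_add _ _ measurable_fst]
  exact hν.add_left hν'

theorem const_smul (hν : MemAB m ν) (c : ℝ) : MemAB m (c • ν) := by
  rw [memAB_iff_variation_fst_absolutelyContinuous] at *
  rw [VectorMeasure.variation_smul, Measure.fst, Measure.map_smul]
  exact hν.smul_left _

protected theorem map {T : SigmaA N A × Z → SigmaA N A × Z} {σ : SigmaA N A → SigmaA N A}
    (hν : MemAB m ν) (hT : Measurable T) (hσ : MeasurePreserving σ m m)
    (hTσ : ∀ p, (T p).1 = σ p.1) : MemAB m (ν.map T) := by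
  rw [memAB_iff_variation_fst_absolutelyContinuous] at *
  refine ((Measure.absolutelyContinuous_of_le VectorMeasure.variation_map_le).map
    measurable_fst).trans ?_
  have hcomm : Prod.fst ∘ T = σ ∘ Prod.fst := funext hTσ
  rw [Measure.map_map measurable_fst hT, hcomm, ← Measure.map_map hσ.measurable measurable_fst]
  conv_rhs => rw [← hσ.map_eq]
  exact hν.map hσ.measurable

theorem toSignedMeasure {M : Measure (SigmaA N A × Z)} [IsFiniteMeasure M] (hM : M.fst ≪ m) :
    MemAB m M.toSignedMeasure :=
  memAB_iff_variation_fst_absolutelyContinuous.2 (by rwa [Measure.variation_toSignedMeasure])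

end MemAB

end AbsolutelyContinuousMarginal

section FiberNorm

variable {m : Measure (SigmaA N A)}

theorem integral_fiberR {μ : Measure (SigmaA N A × K)} [hμ : IsFiniteMeasure μ] (γ : SigmaA N A)
    (u : K → ℝ) :
    ∫ z, u z ∂fiberR m μ γ = (μ.fst.rnDeriv m γ).toReal • ∫ z, u z ∂μ.condKernel γ := by
  rw [fiberR, dif_pos hμ, integral_smul_measure]

section Positive

variable [IsFiniteMeasure m] {μ : Measure (SigmaA N A × K)} [IsFiniteMeasure μ]
  {h : SigmaA N A × K → ℝ}

theorem integrable_integral_fiberR (hμ : μ.fst ≪ m) (hh : Integrable h μ) :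
    Integrable (fun γ ↦ ∫ z, h (γ, z) ∂fiberR m μ γ) m := by
  simp only [integral_fiberR]
  exact (integrable_rnDeriv_smul_iff hμ).2 hh.integral_condKernel

theorem integral_integral_fiberR (hμ : μ.fst ≪ m) (hh : Integrable h μ) :
    ∫ γ, ∫ z, h (γ, z) ∂fiberR m μ γ ∂m = ∫ p, h p ∂μ := by
  simp only [integral_fiberR]
  rw [integral_rnDeriv_smul hμ, Measure.integral_condKernel hh]

end Positive

/-- The integral of `u` against the fiberwise restriction `ν|_γ` of a signed measure. -/
noncomputable def fiberIntegral (m : Measure (SigmaA N A)) (ν : SignedMeasure (SigmaA N A × K))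
    (γ : SigmaA N A) (u : K → ℝ) : ℝ :=
  ∫ z, u z ∂fiberR m (jPos ν) γ - ∫ z, u z ∂fiberR m (jNeg ν) γ

variable {ν : SignedMeasure (SigmaA N A × K)}

theorem fiberIntegral_const_mul (γ : SigmaA N A) (c : ℝ) (u : K → ℝ) :
    fiberIntegral m ν γ (fun z ↦ c * u z) = c * fiberIntegral m ν γ u := by
  simp only [fiberIntegral, integral_const_mul, mul_sub]

theorem fiberIntegral_neg (γ : SigmaA N A) (u : K → ℝ) :
    fiberIntegral m ν γ (fun z ↦ -u z) = -fiberIntegral m ν γ u := by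
  simpa using fiberIntegral_const_mul (ν := ν) γ (-1) u

theorem integrable_fiberIntegral [IsFiniteMeasure m] (hν : MemAB m ν) {h : SigmaA N A × K → ℝ}
    (hh : Measurable h) {C : ℝ} (hC : ∀ p, |h p| ≤ C) :
    Integrable (fun γ ↦ fiberIntegral m ν γ fun z ↦ h (γ, z)) m :=
  (integrable_integral_fiberR hν.1 (integrable_of_measurable_of_abs_le hh hC)).sub
    (integrable_integral_fiberR hν.2.1 (integrable_of_measurable_of_abs_le hh hC))

theorem integral_fiberIntegral [IsFiniteMeasure m] (hν : MemAB m ν) {h : SigmaA N A × K → ℝ}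
    (hh : Measurable h) {C : ℝ} (hC : ∀ p, |h p| ≤ C) :
    ∫ γ, fiberIntegral m ν γ (fun z ↦ h (γ, z)) ∂m = ∫ᵛ p, h p ∂<•ν := by
  have hpos : Integrable h (jPos ν) := integrable_of_measurable_of_abs_le hh hC
  have hneg : Integrable h (jNeg ν) := integrable_of_measurable_of_abs_le hh hC
  simp only [fiberIntegral]
  rw [integral_sub (integrable_integral_fiberR hν.1 hpos)
      (integrable_integral_fiberR hν.2.1 hneg),
    integral_integral_fiberR hν.1 hpos, integral_integral_fiberR hν.2.1 hneg,
    integral_eq_integral_jPos_sub_integral_jNeg hpos hneg]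

theorem infNorm_eq_essSup_iSup_fiberIntegral :
    infNorm m ν = essSup (fun γ ↦ ⨆ u : {u : K → ℝ // LipschitzWith 1 u ∧ ∀ z, |u z| ≤ 1},
      ENNReal.ofReal |fiberIntegral m ν γ u.1|) m := rfl

theorem infNorm_le_iff {B : ℝ} (hB : 0 ≤ B) :
    infNorm m ν ≤ ENNReal.ofReal B ↔ ∀ᵐ γ ∂m, ∀ u : K → ℝ, LipschitzWith 1 u → (∀ z, |u z| ≤ 1) →
      |fiberIntegral m ν γ u| ≤ B := by
  rw [infNorm_eq_essSup_iSup_fiberIntegral]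
  constructor
  · intro h
    filter_upwards [ENNReal.ae_le_essSup fun γ ↦ ⨆ u : {u : K → ℝ // LipschitzWith 1 u ∧
      ∀ z, |u z| ≤ 1}, ENNReal.ofReal |fiberIntegral m ν γ u.1|] with γ hγ u hu hu1
    have := (iSup_le_iff.1 (hγ.trans h)) ⟨u, hu, hu1⟩
    exact (ofReal_le_ofReal_iff hB).1 this
  · intro h
    refine essSup_le_of_ae_le _ ?_
    filter_upwards [h] with γ hγ
    exact iSup_le fun u ↦ ofReal_le_ofReal (hγ u.1 u.2.1 u.2.2)

theorem abs_fiberIntegral_le_mul {γ : SigmaA N A} {B c : ℝ} (hc : 0 ≤ c)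
    (hγ : ∀ u : K → ℝ, LipschitzWith 1 u → (∀ z, |u z| ≤ 1) → |fiberIntegral m ν γ u| ≤ B)
    {u : K → ℝ} (hu : ∀ z, |u z| ≤ c) (hu' : ∀ z z', |u z - u z'| ≤ c * dist z z') :
    |fiberIntegral m ν γ u| ≤ B * c := by
  obtain rfl | hc := hc.eq_or_lt
  · have : u = fun _ ↦ 0 := funext fun z ↦ abs_nonpos_iff.1 (hu z)
    simp [this, fiberIntegral]
  have hlip : LipschitzWith 1 fun z ↦ c⁻¹ * u z := .of_dist_le_mul fun z z' ↦ by
    rw [Real.dist_eq, ← mul_sub, abs_mul, abs_of_pos (inv_pos.2 hc), NNReal.coe_one, one_mul,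
      inv_mul_le_iff₀ hc]
    exact hu' z z'
  have hbdd z : |c⁻¹ * u z| ≤ 1 := by
    rw [abs_mul, abs_of_pos (inv_pos.2 hc), inv_mul_le_iff₀ hc, mul_one]
    exact hu z
  have := hγ _ hlip hbdd
  rwa [fiberIntegral_const_mul, abs_mul, abs_of_pos (inv_pos.2 hc), inv_mul_le_iff₀ hc,
    mul_comm] at this

theorem fiberBound_of_infNorm_le [IsFiniteMeasure m] (hν : MemAB m ν) {B : ℝ} (hB : 0 ≤ B)
    (h : infNorm m ν ≤ ENNReal.ofReal B) : FiberBound m ν B := by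
  intro f h C hf hC hh
  have hbdd := hh.abs_le_of_le hC
  rw [← integral_fiberIntegral hν hh.measurable hbdd, ← integral_const_mul]
  refine abs_integral_le_integral_abs.trans (integral_mono_ae
    (integrable_fiberIntegral hν hh.measurable hbdd).abs ((hh.integrable hf hC).const_mul B) ?_)
  filter_upwards [(infNorm_le_iff hB).1 ‹_›] with γ hγ
  exact abs_fiberIntegral_le_mul (hh.nonneg γ) hγ (hh.abs_le γ) (hh.abs_sub_le γ)

theorem continuous_fiberIntegral (γ : SigmaA N A) :
    Continuous fun u : {u : C(K, ℝ) // LipschitzWith 1 u ∧ ∀ z, |u z| ≤ 1} ↦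
      fiberIntegral m ν γ u.1 := by
  have hcont (ρ : Measure K) [IsFiniteMeasure ρ] :
      Continuous fun u : {u : C(K, ℝ) // LipschitzWith 1 u ∧ ∀ z, |u z| ≤ 1} ↦ ∫ z, u.1 z ∂ρ :=
    continuous_of_dominated (bound := fun _ ↦ 1)
      (fun u ↦ u.1.continuous.aestronglyMeasurable) (fun u ↦ ae_of_all _ u.2.2)
      (integrable_const 1)
      (ae_of_all _ fun z ↦
        (ContinuousEvalConst.continuous_eval_const z).comp continuous_subtype_val)
  simp only [fiberIntegral, integral_fiberR, smul_eq_mul]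
  exact (continuous_const.mul (hcont _)).sub (continuous_const.mul (hcont _))

namespace FiberBound

theorem ae_fiberIntegral_le [IsFiniteMeasure m] {B : ℝ} (h : FiberBound m ν B) (hν : MemAB m ν)
    {u : K → ℝ} (hu : LipschitzWith 1 u) (hu1 : ∀ z, |u z| ≤ 1) :
    ∀ᵐ γ ∂m, fiberIntegral m ν γ u ≤ B := by
  have hum : Measurable fun p : SigmaA N A × K ↦ u p.2 :=
    hu.continuous.measurable.comp measurable_snd
  refine ae_le_of_forall_setIntegral_le (integrable_fiberIntegral hν hum fun p ↦ hu1 p.2)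
    (integrable_const B) fun E hE _ ↦ ?_
  have htest := IsFiberTest.indicator_mul hE hu hu1
  have hone x : E.indicator (1 : SigmaA N A → ℝ) x ≤ 1 := indicator_le_self' (by simp) x
  have := h (measurable_one.indicator hE) hone htest
  rw [← integral_fiberIntegral hν htest.measurable (htest.abs_le_of_le hone)] at this
  simp only [fiberIntegral_const_mul] at this
  calc ∫ γ in E, fiberIntegral m ν γ u ∂m
      = ∫ γ, E.indicator 1 γ * fiberIntegral m ν γ u ∂m := by
        rw [← integral_indicator hE]
        congr with γ
        by_cases hγ : γ ∈ E <;> simp [hγ]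
    _ ≤ B * ∫ γ, E.indicator 1 γ ∂m := (le_abs_self _).trans this
    _ = ∫ _ in E, B ∂m := by
      rw [integral_indicator_one hE, setIntegral_const, smul_eq_mul, mul_comm]

theorem infNorm_le [IsFiniteMeasure m] {B : ℝ} (h : FiberBound m ν B) (hν : MemAB m ν)
    (hB : 0 ≤ B) : infNorm m ν ≤ ENNReal.ofReal B := by
  rw [infNorm_le_iff hB]
  let S := {u : C(K, ℝ) // LipschitzWith 1 u ∧ ∀ z, |u z| ≤ 1}
  have : Nonempty S := ⟨⟨0, LipschitzWith.const 0 |>.weaken zero_le_one, by simp⟩⟩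
  have hdense : ∀ᵐ γ ∂m, ∀ n, fiberIntegral m ν γ (TopologicalSpace.denseSeq S n).1 ≤ B :=
    ae_all_iff.2 fun n ↦ h.ae_fiberIntegral_le hν (TopologicalSpace.denseSeq S n).2.1
      (TopologicalSpace.denseSeq S n).2.2
  filter_upwards [hdense] with γ hγ
  have hS (u : S) : fiberIntegral m ν γ u.1 ≤ B :=
    (TopologicalSpace.denseRange_denseSeq S).induction_on u
      (isClosed_le (continuous_fiberIntegral γ) continuous_const) hγ
  intro u hu hu1
  have hneg := hS ⟨⟨fun z ↦ -u z, hu.neg.continuous⟩, hu.neg, by simpa using hu1⟩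
  refine abs_le'.2 ⟨hS ⟨⟨u, hu.continuous⟩, hu, hu1⟩, ?_⟩
  rwa [← fiberIntegral_neg]

end FiberBound

end FiberNorm

section SubshiftTopology

theorem measurable_shift : Measurable (shift (N := N) (A := A)) :=
  Measurable.subtype_mk (f := fun (x : SigmaA N A) i ↦ x.1 (i + 1)) <|
    measurable_pi_lambda _ fun i ↦ (measurable_pi_apply (i + 1)).comp measurable_subtype_coe

instance metrizableSpace_sigmaA : TopologicalSpace.MetrizableSpace (SigmaA N A) :=
  have : SecondCountableTopology (SigmaA N A) :=
    TopologicalSpace.Subtype.secondCountableTopology _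
  TopologicalSpace.metrizableSpace_of_t3_secondCountable _

theorem isClosed_setOf_admissible :
    IsClosed {x : ℕ → Fin N | ∀ i, A (x i) (x (i + 1)) = true} := by
  have hA : Continuous fun p : Fin N × Fin N ↦ A p.1 p.2 := continuous_of_discreteTopology
  simp only [ofPred_forall]
  exact isClosed_iInter fun i ↦ isClosed_eq
    (hA.comp₂ (continuous_apply i) (continuous_apply (i + 1))) continuous_const

instance compactSpace_sigmaA : CompactSpace (SigmaA N A) :=
  isCompact_iff_compactSpace.1 isClosed_setOf_admissible.isCompact

end SubshiftTopology

section MarginalDensity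

theorem withDensityᵥ_toReal_rnDeriv {X : Type*} [MeasurableSpace X] {μ m : Measure X}
    [IsFiniteMeasure μ] [SigmaFinite m] (h : μ ≪ m) :
    m.withDensityᵥ (fun x ↦ (μ.rnDeriv m x).toReal) = μ.toSignedMeasure := by
  rw [withDensityᵥ_toReal (μ.measurable_rnDeriv m).aemeasurable
    (Measure.lintegral_rnDeriv_lt_top μ m).ne]
  congr 1
  exact Measure.withDensity_rnDeriv_eq _ _ h

theorem variation_withDensityᵥ_le {X : Type*} [MeasurableSpace X] {m : Measure X} {φ : X → ℝ}
    {C : ℝ} (hφ : Integrable φ m) (hC : ∀ x, |φ x| ≤ C) :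
    (m.withDensityᵥ φ).variation ≤ ENNReal.ofReal C • m := by
  rw [Measure.variation_withDensityᵥ hφ, ← withDensity_const]
  exact withDensity_mono (ae_of_all _ fun x ↦ by
    simpa [Real.enorm_eq_ofReal_abs] using ofReal_le_ofReal (hC x))

theorem map_fst_map {X Y : Type*} [MeasurableSpace X] [MeasurableSpace Y]
    (ν : SignedMeasure (X × Y)) {T : X × Y → X × Y} {σ : X → X} (hT : Measurable T)
    (hσ : Measurable σ) (hTσ : ∀ p, (T p).1 = σ p.1) :
    (ν.map T).map Prod.fst = (ν.map Prod.fst).map σ := by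
  have hcomm : Prod.fst ∘ T = σ ∘ Prod.fst := funext hTσ
  ext E hE
  rw [VectorMeasure.map_apply _ measurable_fst hE,
    VectorMeasure.map_apply _ hT (measurable_fst hE), VectorMeasure.map_apply _ hσ hE,
    VectorMeasure.map_apply _ measurable_fst (hσ hE), ← preimage_comp, ← preimage_comp, hcomm]

variable {Z : Type*} [MeasurableSpace Z] {m : Measure (SigmaA N A)}
  {ν : SignedMeasure (SigmaA N A × Z)}

theorem integrable_phiPair {μ₁ μ₂ : Measure (SigmaA N A × Z)} [IsFiniteMeasure μ₁]
    [IsFiniteMeasure μ₂] : Integrable (phiPair m μ₁ μ₂) m :=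
  Measure.integrable_toReal_rnDeriv.sub Measure.integrable_toReal_rnDeriv

theorem map_fst_eq_withDensityᵥ_phiPair [SigmaFinite m] (hν : MemAB m ν) :
    ν.map Prod.fst = m.withDensityᵥ (phiPair m (jPos ν) (jNeg ν)) := by
  calc ν.map Prod.fst
      = VectorMeasure.mapₗ (R := ℝ) Prod.fst
          ((jPos ν).toSignedMeasure - (jNeg ν).toSignedMeasure) := by
        conv_lhs => rw [← ν.toSignedMeasure_toJordanDecomposition]
        rfl
    _ = (jPos ν).fst.toSignedMeasure - (jNeg ν).fst.toSignedMeasure := by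
      rw [map_sub]
      exact congrArg₂ (· - ·) (toSignedMeasure_map _ measurable_fst)
        (toSignedMeasure_map _ measurable_fst)
    _ = m.withDensityᵥ (phiPair m (jPos ν) (jNeg ν)) := by
      rw [← withDensityᵥ_toReal_rnDeriv hν.1, ← withDensityᵥ_toReal_rnDeriv hν.2.1]
      exact (withDensityᵥ_sub' Measure.integrable_toReal_rnDeriv
        Measure.integrable_toReal_rnDeriv).symm

theorem ae_eq_phiPair_iff [SigmaFinite m] (hν : MemAB m ν) {φ : SigmaA N A → ℝ}
    (hφ : Integrable φ m) :
    φ =ᵐ[m] phiPair m (jPos ν) (jNeg ν) ↔ ν.map Prod.fst = m.withDensityᵥ φ := by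
  rw [map_fst_eq_withDensityᵥ_phiPair hν, eq_comm, hφ.withDensityᵥ_eq_iff integrable_phiPair]

theorem IsPerronFrobenius.map_withDensityᵥ {Pσ : (SigmaA N A → ℝ) → SigmaA N A → ℝ}
    (hP : IsPerronFrobenius m Pσ)
    {φ : SigmaA N A → ℝ} (hφ : Integrable φ m) (hPφ : Integrable (Pσ φ) m) :
    (m.withDensityᵥ φ).map shift = m.withDensityᵥ (Pσ φ) := by
  ext E hE
  have hdual := hP φ (E.indicator 1) hφ (measurable_one.indicator hE)
    ⟨1, fun x ↦ by by_cases hx : x ∈ E <;> simp [hx]⟩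
  have hind (f : SigmaA N A → ℝ) (S : Set (SigmaA N A)) (x) :
      f x * S.indicator 1 x = S.indicator f x := by
    by_cases hx : x ∈ S <;> simp [hx]
  have hcomp x : E.indicator (1 : SigmaA N A → ℝ) (shift x) = (shift ⁻¹' E).indicator 1 x := rfl
  simp only [hcomp, hind] at hdual
  rw [VectorMeasure.map_apply _ measurable_shift hE,
    withDensityᵥ_apply hφ (measurable_shift hE), withDensityᵥ_apply hPφ hE,
    ← integral_indicator hE, ← integral_indicator (measurable_shift hE), hdual]

theorem IsPerronFrobenius.map_fst_iterate_map {Pσ : (SigmaA N A → ℝ) → SigmaA N A → ℝ}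
    (hP : IsPerronFrobenius m Pσ)
    {T : SigmaA N A × Z → SigmaA N A × Z} (hT : Measurable T) (hTσ : ∀ p, (T p).1 = shift p.1)
    {φ : SigmaA N A → ℝ} (hφ : ∀ n, Integrable (Pσ^[n] φ) m)
    (hν : ν.map Prod.fst = m.withDensityᵥ φ) (n : ℕ) :
    ((VectorMeasure.map · T)^[n] ν).map Prod.fst = m.withDensityᵥ (Pσ^[n] φ) := by
  induction n with
  | zero => exact hν
  | succ n ih =>
    have hsucc := hφ (n + 1)
    simp only [Function.iterate_succ_apply'] at hsucc ⊢
    rw [map_fst_map _ hT measurable_shift hTσ, ih, hP.map_withDensityᵥ (hφ n) hsucc]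

end MarginalDensity

section LipschitzNorm

variable {X : Type*} {d : X → X → ℝ} {φ : X → ℝ}

theorem abs_le_of_thetaNorm_le {t : ℝ} (ht : 0 ≤ t) (h : thetaNorm d φ ≤ ENNReal.ofReal t)
    (x : X) : |φ x| ≤ t :=
  (ofReal_le_ofReal_iff ht).1 <|
    (le_iSup (fun x ↦ ENNReal.ofReal |φ x|) x).trans (le_self_add.trans h)

theorem thetaNorm_sub_const_le (c : ℝ) :
    thetaNorm d (fun x ↦ φ x - c) ≤ thetaNorm d φ + ENNReal.ofReal |c| := by
  have hsup : supNormE (fun x ↦ φ x - c) ≤ supNormE φ + ENNReal.ofReal |c| := iSup_le fun x ↦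
    calc ENNReal.ofReal |φ x - c| ≤ ENNReal.ofReal |φ x| + ENNReal.ofReal |c| :=
          (ofReal_le_ofReal (abs_sub _ _)).trans ofReal_add_le
      _ ≤ supNormE φ + ENNReal.ofReal |c| := by
          gcongr
          exact le_iSup (fun x ↦ ENNReal.ofReal |φ x|) x
  have hlip : lipConst d (fun x ↦ φ x - c) = lipConst d φ := by simp [lipConst]
  rw [thetaNorm, thetaNorm, hlip, add_right_comm]
  gcongr

theorem lipD_of_thetaNorm_ne_top (hself : ∀ x, d x x = 0) (hpos : ∀ x y, x ≠ y → 0 < d x y)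
    (h : thetaNorm d φ ≠ ⊤) : LipD d φ := by
  have hlip : lipConst d φ ≠ ⊤ := (add_ne_top.1 h).2
  refine ⟨(lipConst d φ).toReal, fun x y ↦ ?_⟩
  obtain rfl | hxy := eq_or_ne x y
  · simp [hself]
  · rw [← div_le_iff₀ (hpos x y hxy), ← ofReal_le_ofReal_iff toReal_nonneg, ofReal_toReal hlip]
    exact le_iSup₂ (f := fun x y ↦ ENNReal.ofReal (|φ x - φ y| / d x y)) x y

theorem LipD.continuous [TopologicalSpace X] (hself : ∀ x, d x x = 0)
    (hd : ∀ y, Continuous fun x ↦ d x y) (hφ : LipD d φ) : Continuous φ := by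
  obtain ⟨L, hL⟩ := hφ
  refine continuous_iff_continuousAt.2 fun y ↦ tendsto_iff_dist_tendsto_zero.2 ?_
  refine squeeze_zero (fun _ ↦ dist_nonneg) (fun x ↦ hL x y) ?_
  have := ((hd y).tendsto y).const_mul L
  rwa [hself, mul_zero] at this

end LipschitzNorm

section SymbolicMetric

variable {θ : ℝ}

theorem dTheta_self (x : SigmaA N A) : dTheta θ x x = 0 := by
  simp [dTheta]

theorem dTheta_term_nonneg (hθ : 0 ≤ θ) (x y : SigmaA N A) (i : ℕ) :
    0 ≤ θ ^ i * (if x.1 i = y.1 i then (0 : ℝ) else 1) :=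
  mul_nonneg (pow_nonneg hθ i) (by split_ifs <;> simp)

theorem dTheta_term_le (hθ : 0 ≤ θ) (x y : SigmaA N A) (i : ℕ) :
    θ ^ i * (if x.1 i = y.1 i then (0 : ℝ) else 1) ≤ θ ^ i :=
  mul_le_of_le_one_right (pow_nonneg hθ i) (by split_ifs <;> simp)

theorem dTheta_pos (hθ0 : 0 < θ) (hθ1 : θ < 1) {x y : SigmaA N A} (hxy : x ≠ y) :
    0 < dTheta θ x y := by
  obtain ⟨i, hi⟩ : ∃ i, x.1 i ≠ y.1 i := Function.ne_iff.1 (Subtype.coe_injective.ne hxy)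
  have hsum : Summable fun i ↦ θ ^ i * (if x.1 i = y.1 i then (0 : ℝ) else 1) :=
    .of_nonneg_of_le (dTheta_term_nonneg hθ0.le x y) (dTheta_term_le hθ0.le x y)
      (summable_geometric_of_lt_one hθ0.le hθ1)
  exact hsum.tsum_pos (dTheta_term_nonneg hθ0.le x y) i (by simp [hi, hθ0])

theorem continuous_dTheta_left (hθ0 : 0 ≤ θ) (hθ1 : θ < 1) (y : SigmaA N A) :
    Continuous fun x ↦ dTheta θ x y := by
  refine continuous_tsum (fun i ↦ ?_) (summable_geometric_of_lt_one hθ0 hθ1) fun i x ↦ ?_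
  · have hdisc : Continuous fun a : Fin N ↦ if a = y.1 i then (0 : ℝ) else 1 :=
      continuous_of_discreteTopology
    exact continuous_const.mul (hdisc.comp ((continuous_apply i).comp continuous_subtype_val))
  · rw [Real.norm_of_nonneg (dTheta_term_nonneg hθ0 x y i)]
    exact dTheta_term_le hθ0 x y i

theorem lipD_of_thetaNorm_dTheta_ne_top (hθ0 : 0 < θ) (hθ1 : θ < 1) {φ : SigmaA N A → ℝ}
    (h : thetaNorm (dTheta θ) φ ≠ ⊤) : LipD (dTheta θ) φ :=
  lipD_of_thetaNorm_ne_top dTheta_self (fun _ _ ↦ dTheta_pos hθ0 hθ1) h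

theorem integrable_of_thetaNorm_ne_top {m : Measure (SigmaA N A)} [IsFiniteMeasure m]
    (hθ0 : 0 < θ) (hθ1 : θ < 1) {φ : SigmaA N A → ℝ} (h : thetaNorm (dTheta θ) φ ≠ ⊤) :
    Integrable φ m :=
  ((lipD_of_thetaNorm_dTheta_ne_top hθ0 hθ1 h).continuous dTheta_self
    (continuous_dTheta_left hθ0.le hθ1)).integrable_of_hasCompactSupport
      (HasCompactSupport.of_compactSpace φ)

end SymbolicMetric

section ExponentialDecay

theorem MemAB.iterate_map {Z : Type*} [MeasurableSpace Z] {m : Measure (SigmaA N A)}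
    {ν : SignedMeasure (SigmaA N A × Z)} {σ : SigmaA N A → SigmaA N A}
    {T : SigmaA N A × Z → SigmaA N A × Z} (hν : MemAB m ν) (hT : Measurable T)
    (hσ : MeasurePreserving σ m m) (hTσ : ∀ p, (T p).1 = σ p.1) (n : ℕ) :
    MemAB m ((VectorMeasure.map · T)^[n] ν) := by
  induction n with
  | zero => exact hν
  | succ n ih =>
    rw [Function.iterate_succ_apply']
    exact ih.map hT hσ hTσ

theorem HasGap.thetaNorm_iterate_le {m : Measure (SigmaA N A)}
    {Pσ : (SigmaA N A → ℝ) → SigmaA N A → ℝ} {θ D r s : ℝ} {φ : SigmaA N A → ℝ}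
    (hgap : HasGap m θ Pσ D r) (hθ0 : 0 < θ) (hθ1 : θ < 1) (hD : 0 ≤ D) (hr : 0 ≤ r)
    (hφ : thetaNorm (dTheta θ) φ ≤ ENNReal.ofReal s) (hφ0 : ∫ x, φ x ∂m = 0) (n : ℕ) :
    thetaNorm (dTheta θ) (Pσ^[n] φ) ≤ ENNReal.ofReal (D * s * r ^ n) := by
  refine (hgap φ (lipD_of_thetaNorm_dTheta_ne_top hθ0 hθ1 (ne_top_of_le_ne_top ofReal_ne_top hφ))
    hφ0 n).trans ?_
  rw [mul_right_comm, ofReal_mul (p := D * r ^ n) (by positivity)]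
  gcongr

variable {m : Measure (SigmaA N A)} {ν : SignedMeasure (SigmaA N A × K)} {θ B : ℝ}

theorem sNorm_le [IsFiniteMeasure m] (hν : MemAB m ν) {φ : SigmaA N A → ℝ} (hφ : Integrable φ m)
    (hfst : ν.map Prod.fst = m.withDensityᵥ φ) (hB : 0 ≤ B) (h : FiberBound m ν B) :
    sNorm m θ ν ≤ thetaNorm (dTheta θ) φ + ENNReal.ofReal B :=
  add_le_add (iInf_le_of_le ⟨φ, (ae_eq_phiPair_iff hν hφ).2 hfst⟩ le_rfl) (h.infNorm_le hν hB)

variable {T : SigmaA N A × K → SigmaA N A × K} {Pσ : (SigmaA N A → ℝ) → SigmaA N A → ℝ}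
  {α ξ D r : ℝ}

theorem sNorm_iterate_map_le [IsFiniteMeasure m] (hθ0 : 0 < θ) (hθ1 : θ < 1)
    (hσ : MeasurePreserving shift m m) (hdist : ∀ z z' : K, dist z z' ≤ 1)
    (hT : IsFiberContraction shift α T) (hPF : IsPerronFrobenius m Pσ) (hgap : HasGap m θ Pσ D r)
    (hD : 0 ≤ D) (hr : 0 ≤ r) (hrξ : r ≤ ξ) (hα : 0 ≤ α) (hαξ : α < ξ) {s : ℝ}
    {φ : SigmaA N A → ℝ} (hs : 0 ≤ s) (hφ : thetaNorm (dTheta θ) φ ≤ ENNReal.ofReal s)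
    (hφ0 : ∫ x, φ x ∂m = 0) (hν : MemAB m ν) (hfst : ν.map Prod.fst = m.withDensityᵥ φ)
    (hB : 0 ≤ B) (hνB : FiberBound m ν B) (n : ℕ) :
    sNorm m θ ((VectorMeasure.map · T)^[n] ν) ≤
      ENNReal.ofReal ((D * s + (B + D * s / (ξ - α))) * ξ ^ n) := by
  have hξ : 0 ≤ ξ := hr.trans hrξ
  have : 0 ≤ B + D * s / (ξ - α) :=
    add_nonneg hB (div_nonneg (by positivity) (sub_pos.2 hαξ).le)
  have hPφ := hgap.thetaNorm_iterate_le hθ0 hθ1 hD hr hφ hφ0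
  have hint n : Integrable (Pσ^[n] φ) m :=
    integrable_of_thetaNorm_ne_top hθ0 hθ1 (ne_top_of_le_ne_top ofReal_ne_top (hPφ n))
  have hmarg := hPF.map_fst_iterate_map hT.measurable hT.fst_eq hint hfst
  have hfiber : FiberBound m ((VectorMeasure.map · T)^[n] ν)
      ((B + D * s / (ξ - α)) * ξ ^ n) := by
    refine hνB.iterate_map hB hT hα hdist hσ (by positivity) hr hrξ hαξ (fun k ↦ ?_) n
    rw [hmarg k]
    exact variation_withDensityᵥ_le (hint k) (abs_le_of_thetaNorm_le (by positivity) (hPφ k))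
  calc sNorm m θ ((VectorMeasure.map · T)^[n] ν)
    _ ≤ thetaNorm (dTheta θ) (Pσ^[n] φ)
          + ENNReal.ofReal ((B + D * s / (ξ - α)) * ξ ^ n) :=
        sNorm_le (hν.iterate_map hT.measurable hσ hT.fst_eq n) (hint n) (hmarg n)
          (by positivity) hfiber
    _ ≤ ENNReal.ofReal (D * s * ξ ^ n) + ENNReal.ofReal ((B + D * s / (ξ - α)) * ξ ^ n) := by
        gcongr
        exact (hPφ n).trans (by gcongr)
    _ = ENNReal.ofReal ((D * s + (B + D * s / (ξ - α))) * ξ ^ n) := by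
        rw [← ofReal_add (by positivity) (by positivity), ← add_mul]

section MassDefect

variable {X Y : Type*} [MeasurableSpace X] [MeasurableSpace Y] {M : Measure (X × Y)}
  {μ : SignedMeasure (X × Y)} {φ : X → ℝ}

theorem apply_univ_eq_integral {m : Measure X} (hφ : Integrable φ m)
    (hfst : μ.map Prod.fst = m.withDensityᵥ φ) : μ univ = ∫ x, φ x ∂m := by
  rw [← setIntegral_univ, ← withDensityᵥ_apply hφ .univ, ← hfst,
    VectorMeasure.map_apply μ measurable_fst .univ, preimage_univ]

theorem map_fst_sub_smul_toSignedMeasure [IsFiniteMeasure M] (hφ : Integrable φ M.fst)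
    (hfst : μ.map Prod.fst = M.fst.withDensityᵥ φ) (c : ℝ) :
    (μ - c • M.toSignedMeasure).map Prod.fst = M.fst.withDensityᵥ fun x ↦ φ x - c := by
  ext E hE
  have hμE : μ (Prod.fst ⁻¹' E) = ∫ x in E, φ x ∂M.fst := by
    rw [← VectorMeasure.map_apply μ measurable_fst hE, hfst, withDensityᵥ_apply hφ hE]
  rw [VectorMeasure.map_apply _ measurable_fst hE,
    withDensityᵥ_apply (f := fun x ↦ φ x - c) (hφ.sub (integrable_const c)) hE,
    integral_sub hφ.integrableOn (integrable_const c), sub_apply,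
    smul_apply, hμE, Measure.toSignedMeasure_apply_measurable (measurable_fst hE),
    setIntegral_const, Measure.fst, map_measureReal_apply measurable_fst hE, smul_eq_mul,
    smul_eq_mul, mul_comm]

end MassDefect

theorem MemAB.sNorm_iterate_map_sub_mass_le {M : Measure (SigmaA N A × K)} [IsProbabilityMeasure M]
    {μ : SignedMeasure (SigmaA N A × K)} (hμ : MemAB M.fst μ)
    (hθ0 : 0 < θ) (hθ1 : θ < 1) (hσ : MeasurePreserving shift M.fst M.fst)
    (hdist : ∀ z z' : K, dist z z' ≤ 1) (hT : IsFiberContraction shift α T)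
    (hPF : IsPerronFrobenius M.fst Pσ) (hgap : HasGap M.fst θ Pσ D r) (hD : 0 ≤ D)
    (hr : 0 ≤ r) (hrξ : r ≤ ξ) (hα : 0 ≤ α) (hαξ : α < ξ)
    {t : ℝ} {φ : SigmaA N A → ℝ} (ht : 0 ≤ t)
    (hφ : thetaNorm (dTheta θ) φ ≤ ENNReal.ofReal t)
    (hfst : μ.map Prod.fst = M.fst.withDensityᵥ φ) (hB : 0 ≤ B) (hμB : FiberBound M.fst μ B)
    (n : ℕ) :
    sNorm M.fst θ ((VectorMeasure.map · T)^[n] (μ - μ univ • M.toSignedMeasure)) ≤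
      ENNReal.ofReal ((2 * D + 1 + 2 * D / (ξ - α)) * ξ ^ n * (t + B)) := by
  have hint : Integrable φ M.fst :=
    integrable_of_thetaNorm_ne_top hθ0 hθ1 (ne_top_of_le_ne_top ofReal_ne_top hφ)
  have hmass : μ univ = ∫ x, φ x ∂M.fst := apply_univ_eq_integral hint hfst
  have hmass_le : |μ univ| ≤ t := by
    simpa [hmass] using norm_integral_le_of_norm_le_const (μ := M.fst) (f := φ)
      (.of_forall (abs_le_of_thetaNorm_le ht hφ))
  have hcentered : thetaNorm (dTheta θ) (fun x ↦ φ x - μ univ) ≤ ENNReal.ofReal (2 * t) :=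
    calc thetaNorm (dTheta θ) (fun x ↦ φ x - μ univ)
      _ ≤ ENNReal.ofReal t + ENNReal.ofReal t :=
          (thetaNorm_sub_const_le _).trans (add_le_add hφ (ofReal_le_ofReal hmass_le))
      _ = ENNReal.ofReal (2 * t) := by rw [← ofReal_add ht ht, two_mul]
  have hzero : ∫ x, (φ x - μ univ) ∂M.fst = 0 := by
    simp [integral_sub hint (integrable_const _), hmass]
  have hfiber : FiberBound M.fst (μ - μ univ • M.toSignedMeasure) (B + t) :=
    (hμB.sub_smul fiberBound_toSignedMeasure _).mono (by simpa using hmass_le)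
  refine (sNorm_iterate_map_le hθ0 hθ1 hσ hdist hT hPF hgap hD hr hrξ hα hαξ (by positivity)
    hcentered hzero (hμ.sub ((MemAB.toSignedMeasure .rfl).const_smul _))
    (map_fst_sub_smul_toSignedMeasure hint hfst _) (by positivity) hfiber n).trans
    (ofReal_le_ofReal ?_)
  have : 0 < ξ - α := sub_pos.2 hαξ
  have hξ : 0 ≤ ξ := hr.trans hrξ
  have hDB : 0 ≤ 2 * D * B + 2 * D / (ξ - α) * B := by positivity
  calc (D * (2 * t) + (B + t + D * (2 * t) / (ξ - α))) * ξ ^ n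
    _ ≤ (D * (2 * t) + (B + t + D * (2 * t) / (ξ - α))
          + (2 * D * B + 2 * D / (ξ - α) * B)) * ξ ^ n := by
        gcongr ?_ * ξ ^ n
        exact le_add_of_nonneg_right hDB
    _ = (2 * D + 1 + 2 * D / (ξ - α)) * ξ ^ n * (t + B) := by ring

theorem MemS.sNorm_iterate_map_sub_mass_le {M : Measure (SigmaA N A × K)} [IsProbabilityMeasure M]
    {μ : SignedMeasure (SigmaA N A × K)} (hμ : MemS M.fst θ μ)
    (hθ0 : 0 < θ) (hθ1 : θ < 1) (hσ : MeasurePreserving shift M.fst M.fst)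
    (hdist : ∀ z z' : K, dist z z' ≤ 1) (hT : IsFiberContraction shift α T)
    (hPF : IsPerronFrobenius M.fst Pσ) (hgap : HasGap M.fst θ Pσ D r) (hD : 0 ≤ D)
    (hr : 0 ≤ r) (hrξ : r ≤ ξ) (hα : 0 ≤ α) (hαξ : α < ξ) (n : ℕ) :
    sNorm M.fst θ ((VectorMeasure.map · T)^[n] (μ - μ univ • M.toSignedMeasure)) ≤
      ENNReal.ofReal ((2 * D + 1 + 2 * D / (ξ - α)) * ξ ^ n) * sNorm M.fst θ μ := by
  obtain ⟨hμAB : MemAB M.fst μ, hfin : infNorm M.fst μ < ⊤, -⟩ := hμ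
  have : 0 < ξ - α := sub_pos.2 hαξ
  have hξ : 0 < ξ := hα.trans_lt hαξ
  have hc : 0 < (2 * D + 1 + 2 * D / (ξ - α)) * ξ ^ n := by positivity
  have hfiber : FiberBound M.fst μ (infNorm M.fst μ).toReal :=
    fiberBound_of_infNorm_le hμAB toReal_nonneg (ofReal_toReal hfin.ne).ge
  change _ ≤ _ * ((⨅ φ : {φ // φ =ᵐ[M.fst] phiPair M.fst (jPos μ) (jNeg μ)},
    thetaNorm (dTheta θ) φ.1) + infNorm M.fst μ)
  rw [iInf_add, mul_iInf_of_ne (ofReal_pos.2 hc).ne' ofReal_ne_top]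
  refine le_iInf fun ⟨φ, hφ⟩ ↦ ?_
  obtain htop | htop := eq_or_ne (thetaNorm (dTheta θ) φ) ⊤
  · simp [htop, mul_top (ofReal_pos.2 hc).ne']
  · have hfst : μ.map Prod.fst = M.fst.withDensityᵥ φ :=
      (ae_eq_phiPair_iff hμAB (integrable_of_thetaNorm_ne_top hθ0 hθ1 htop)).1 hφ
    refine (hμAB.sNorm_iterate_map_sub_mass_le hθ0 hθ1 hσ hdist hT hPF hgap hD hr hrξ hα hαξ
      toReal_nonneg (ofReal_toReal htop).ge hfst toReal_nonneg hfiber n).trans ?_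
    rw [ofReal_mul hc.le, ofReal_add toReal_nonneg toReal_nonneg, ofReal_toReal htop,
      ofReal_toReal hfin.ne]

end ExponentialDecay

theorem transfer_operator_spectral_gap_general {θ : ℝ} (hθ0 : 0 < θ) (hθ1 : θ < 1)
    {m : Measure (SigmaA N A)} [IsProbabilityMeasure m] (hminv : m.map shift = m)
    (hdiam : Metric.diam (univ : Set K) ≤ 1) {G : SigmaA N A × K → K}
    (hGm : Measurable (skew G)) {α : ℝ} (hα0 : 0 ≤ α) (hα1 : α < 1) (hG1 : CondG1 G α)
    {Pσ : (SigmaA N A → ℝ) → SigmaA N A → ℝ} (hPF : IsPerronFrobenius m Pσ) {D r : ℝ}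
    (hD : 0 ≤ D) (hr0 : 0 ≤ r) (hr1 : r < 1) (hgap : HasGap m θ Pσ D r) :
    ∃ P Nop : SignedMeasure (SigmaA N A × K) → SignedMeasure (SigmaA N A × K),
      (∀ μ, MemS m θ μ → transfer G μ = P μ + Nop μ) ∧
      (∀ μ, MemS m θ μ → P (P μ) = P μ) ∧
      (∃ ν₀ : SignedMeasure (SigmaA N A × K), ν₀ ≠ 0 ∧
        ∀ μ, MemS m θ μ → ∃ c : ℝ, P μ = c • ν₀) ∧
      (∃ ξ K₀ : ℝ, 0 < ξ ∧ ξ < 1 ∧ 0 < K₀ ∧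
        ∀ μ, MemS m θ μ → ∀ n : ℕ, 1 ≤ n →
          sNorm m θ (Nop^[n] μ) ≤ ENNReal.ofReal (K₀ * ξ ^ n) * sNorm m θ μ) ∧
      (∀ μ, MemS m θ μ → P (Nop μ) = 0 ∧ Nop (P μ) = 0) := by
  have hσ : MeasurePreserving shift m m := ⟨measurable_shift, hminv⟩
  have hT : IsFiberContraction shift α (skew G) := ⟨hGm, fun _ ↦ rfl, hG1⟩
  have hdist (z z' : K) : dist z z' ≤ 1 :=
    (Metric.dist_le_diam_of_mem isCompact_univ.isBounded (mem_univ z) (mem_univ z')).trans hdiam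
  obtain ⟨M, _, rfl, hM⟩ := exists_isProbabilityMeasure_measurePreserving hσ hGm (fun _ ↦ rfl)
    (hT.continuous_snd hα0)
  obtain ⟨ξ, hmax, hξ1⟩ := exists_between (max_lt hα1 hr1)
  obtain ⟨hαξ, hrξ⟩ := max_lt_iff.1 hmax
  have : 0 < ξ - α := sub_pos.2 hαξ
  let Nop : Module.End ℝ (SignedMeasure (SigmaA N A × K)) :=
    VectorMeasure.mapₗ (skew G) - massProj M
  have hPP : massProj M * massProj M = massProj M := isIdempotentElem_massProj
  have hPN : massProj M * Nop = 0 := massProj_mul_mapₗ_sub hGm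
  have hNP : Nop * massProj M = 0 := mapₗ_sub_mul_massProj hM
  refine ⟨massProj M, Nop,
    fun μ _ ↦ (add_sub_cancel (massProj M μ) (VectorMeasure.mapₗ (skew G) μ)).symm,
    fun μ _ ↦ LinearMap.congr_fun hPP μ,
    ⟨M.toSignedMeasure, toSignedMeasure_ne_zero, fun μ _ ↦ ⟨μ univ, rfl⟩⟩,
    ⟨ξ, 2 * D + 1 + 2 * D / (ξ - α), hα0.trans_lt hαξ, hξ1, by positivity, fun μ hμ n hn ↦ ?_⟩,
    fun μ _ ↦ ⟨LinearMap.congr_fun hPN μ, LinearMap.congr_fun hNP μ⟩⟩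
  rw [iterate_mapₗ_sub_massProj hM μ (Nat.one_le_iff_ne_zero.1 hn)]
  exact hμ.sNorm_iterate_map_sub_mass_le hθ0 hθ1 hσ hdist hT hPF hgap hD hr0 hrξ.le hα0 hαξ n

/-- **Spectral gap for the transfer operator on `S^∞`.**
`F^* = P + N` on `S^∞`, where `P` is a projection with one-dimensional
image, `‖N^n μ‖_{S^∞} ≤ K ξ^n ‖μ‖_{S^∞}` for some `ξ ∈ (0,1)`, `K > 0`,
and `PN = NP = 0`. -/
theorem transfer_operator_spectral_gap
    (N : ℕ) (A : Fin N → Fin N → Bool) (hA : Aperiodic A)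
    (θ : ℝ) (hθ0 : 0 < θ) (hθ1 : θ < 1)
    (m : Measure (SigmaA N A)) [IsProbabilityMeasure m]
    (hmM : IsMarkov m) (hminv : m.map shift = m)
    {K : Type*} [MetricSpace K] [CompactSpace K] [Nonempty K]
    [MeasurableSpace K] [BorelSpace K]
    (hdiam : Metric.diam (Set.univ : Set K) = 1)
    (G : SigmaA N A × K → K) (hGm : Measurable (skew G))
    (α : ℝ) (hα0 : 0 < α) (hα1 : α < 1) (hG1 : CondG1 G α)
    (Pσ : (SigmaA N A → ℝ) → SigmaA N A → ℝ) (hPF : IsPerronFrobenius m Pσ)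
    (D r : ℝ) (hD : 0 < D) (hr0 : 0 < r) (hr1 : r < 1)
    (hgap : HasGap m θ Pσ D r)
    (C₂ : ℝ) (hC₂ : 0 < C₂)
    (hLY : ∀ φ : SigmaA N A → ℝ, LipD (dTheta θ) φ → ∀ n : ℕ, 1 ≤ n →
      thetaNorm (dTheta θ) (Pσ^[n] φ) ≤
        ENNReal.ofReal (θ ^ n) * thetaNorm (dTheta θ) φ +
          ENNReal.ofReal C₂ * supNormE φ) :
    ∃ P Nop : SignedMeasure (SigmaA N A × K) → SignedMeasure (SigmaA N A × K),
      (∀ μ, MemS m θ μ → transfer G μ = P μ + Nop μ) ∧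
      (∀ μ, MemS m θ μ → P (P μ) = P μ) ∧
      (∃ ν₀ : SignedMeasure (SigmaA N A × K), ν₀ ≠ 0 ∧
        ∀ μ, MemS m θ μ → ∃ c : ℝ, P μ = c • ν₀) ∧
      (∃ ξ K₀ : ℝ, 0 < ξ ∧ ξ < 1 ∧ 0 < K₀ ∧
        ∀ μ, MemS m θ μ → ∀ n : ℕ, 1 ≤ n →
          sNorm m θ (Nop^[n] μ) ≤ ENNReal.ofReal (K₀ * ξ ^ n) * sNorm m θ μ) ∧
      (∀ μ, MemS m θ μ → P (Nop μ) = 0 ∧ Nop (P μ) = 0) := by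
  exact transfer_operator_spectral_gap_general hθ0 hθ1 hminv hdiam.le hGm hα0.le hα1 hG1 hPF hD.le
    hr0.le hr1 hgap

end RDS
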